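/- arXiv:2604.25729 — 3 statements merged into one kernel-verified Lean document; each statement's English description precedes it below -/
import Mathlib

section
/- Let n ≥ 1 be an integer, d a nonnegative integer, and f ∈ ℂ[y_i^{±1} : 1 ≤ i ≤ n] a symmetric Laurent polynomial (invariant under all permutations of y_1,…,y_n) such that (y_1⋯y_n)^d · f(y) is a polynomial. Then there exists a unique analytic function F on the open set ℂ³∖Â_n such that F(α,β,γ) = S_n[f](α,β,γ) for every (α,β,γ) ∉ Â_n with Re α > d−1, Re β > −1 and Re γ > 0; that is, S_n[f] admits a unique analytic continuation to ℂ³∖Â_n. -/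
open MeasureTheory Complex

noncomputable section

/-- The open ordered simplex `Δ_n = {y : 1 > y_1 > ⋯ > y_n > 0}`. -/
def orderedSimplex (n : ℕ) : Set (Fin n → ℝ) :=
  {y | (∀ i, 0 < y i ∧ y i < 1) ∧ ∀ i j : Fin n, i < j → y j < y i}

/-- Evaluation of the Laurent polynomial with coefficient family `c` at a real point. -/
def laurentEval {n : ℕ} (c : (Fin n → ℤ) →₀ ℂ) (y : Fin n → ℝ) : ℂ :=
  c.sum fun k a => a * ∏ i, ((y i : ℂ)) ^ (k i)

/-- The Selberg integrand `∏ y_i^α (1-y_i)^β ∏_{i<j} (y_i-y_j)^{2γ} · f(y)`. -/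
def selbergIntegrand (n : ℕ) (f : (Fin n → ℝ) → ℂ) (α β γ : ℂ) (y : Fin n → ℝ) : ℂ :=
  (∏ i, ((y i : ℂ) ^ α * (((1 - y i : ℝ)) : ℂ) ^ β)) *
    (∏ i : Fin n, ∏ j : Fin n,
      if i < j then (((y i - y j : ℝ)) : ℂ) ^ (2 * γ) else 1) * f y

/-- The Selberg integral `S_n[f](α,β,γ)`. -/
def selbergS (n : ℕ) (f : (Fin n → ℝ) → ℂ) (α β γ : ℂ) : ℂ :=
  ∫ y in orderedSimplex n, selbergIntegrand n f α β γ y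

/-- The refined hyperplane arrangement `Â_n ⊂ ℂ³` of Sussman. -/
def setAhat (n : ℕ) : Set (ℂ × ℂ × ℂ) :=
  {p | (∃ j : ℕ, 1 ≤ j ∧ j ≤ n ∧
          ((∃ m : ℤ, p.1 + ((j : ℂ) - 1) * p.2.2 = m) ∨
           (∃ m : ℤ, p.2.1 + ((j : ℂ) - 1) * p.2.2 = m))) ∨
       (∃ j : ℕ, 1 ≤ j ∧ j ≤ n - 1 ∧ ∃ m : ℤ, ((j : ℂ) + 1) * p.2.2 = m)}

set_option linter.unusedSectionVars false
namespace SelA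
open MvPolynomial

variable {n : ℕ} {K : Type*} [CommRing K] [IsDomain K]

/-- swap of variables -/
def sw (i j : Fin n) : MvPolynomial (Fin n) K →ₐ[K] MvPolynomial (Fin n) K :=
  rename (Equiv.swap i j)

lemma dvd_sub_sw (i j : Fin n) (g : MvPolynomial (Fin n) K) : (X i - X j) ∣ g - sw i j g := by
  induction g using MvPolynomial.induction_on with
  | C a => simp [sw]
  | add p q hp hq =>
    have : p + q - sw i j (p + q) = (p - sw i j p) + (q - sw i j q) := by rw [map_add]; ring
    rw [this]; exact dvd_add hp hq
  | mul_X p k hp =>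
    have : p * X k - sw i j (p * X k) = (p - sw i j p) * X k + sw i j p * (X k - X (Equiv.swap i j k)) := by
      rw [map_mul]; simp [sw]; ring
    rw [this]
    refine dvd_add (Dvd.dvd.mul_right hp _) (Dvd.dvd.mul_left ?_ _)
    rcases eq_or_ne k i with rfl | h1
    · simp
    rcases eq_or_ne k j with rfl | h2
    · rw [Equiv.swap_apply_right, ← neg_sub (X i), dvd_neg]
    · rw [Equiv.swap_apply_of_ne_of_ne h1 h2]; simp

/-- divided difference -/
def D (i j : Fin n) (g : MvPolynomial (Fin n) K) : MvPolynomial (Fin n) K :=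
  Classical.choose (dvd_sub_sw i j g)

lemma D_spec (i j : Fin n) (g : MvPolynomial (Fin n) K) : g - sw i j g = (X i - X j) * D i j g :=
  Classical.choose_spec (dvd_sub_sw i j g)

lemma X_sub_ne {i j : Fin n} (h : i ≠ j) : (X i - X j : MvPolynomial (Fin n) K) ≠ 0 := by
  rw [sub_ne_zero]; intro h'; exact h (X_injective h')

lemma D_uniq {i j : Fin n} (h : i ≠ j) {g d : MvPolynomial (Fin n) K}
    (hd : g - sw i j g = (X i - X j) * d) : D i j g = d := by
  rw [D_spec] at hd
  exact mul_left_cancel₀ (X_sub_ne h) hd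

lemma D_map {K' : Type*} [CommRing K'] [IsDomain K'] (φ : K →+* K') {i j : Fin n} (h : i ≠ j)
    (g : MvPolynomial (Fin n) K) : map φ (D i j g) = D i j (map φ g) := by
  symm
  apply D_uniq h
  have := congrArg (map φ) (D_spec i j g)
  simp only [map_sub, map_mul, map_X] at this
  rw [← this, sw, sw, map_rename]

lemma sw_sw (i j : Fin n) (g : MvPolynomial (Fin n) K) : sw i j (sw i j g) = g := by
  have : (⇑(Equiv.swap i j) ∘ ⇑(Equiv.swap i j)) = id := by
    ext k; simp
  rw [sw, rename_rename, this, rename_id_apply]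

lemma sw_D {i j : Fin n} (h : i ≠ j) (g : MvPolynomial (Fin n) K) : sw i j (D i j g) = D i j g := by
  symm
  apply D_uniq h
  have := congrArg (sw i j) (D_spec i j g)
  rw [map_mul, map_sub, sw_sw, map_sub] at this
  have h1 : sw i j (X i : MvPolynomial (Fin n) K) = X j := by simp [sw]
  have h2 : sw i j (X j : MvPolynomial (Fin n) K) = X i := by simp [sw]
  rw [h1, h2] at this
  linear_combination -this

lemma D_mul {i j : Fin n} (h : i ≠ j) (u b : MvPolynomial (Fin n) K) :
    D i j (u * b) = D i j u * b + sw i j u * D i j b := by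
  apply D_uniq h
  have h1 := D_spec i j u
  have h2 := D_spec i j b
  rw [map_mul]
  linear_combination b * h1 + sw i j u * h2

lemma D_inv {i j : Fin n} (h : i ≠ j) {u : MvPolynomial (Fin n) K} (hu : sw i j u = u) :
    D i j u = 0 := by
  apply D_uniq h; rw [hu]; ring

lemma D_mul_inv {i j : Fin n} (h : i ≠ j) {u : MvPolynomial (Fin n) K} (hu : sw i j u = u)
    (b : MvPolynomial (Fin n) K) : D i j (u * b) = u * D i j b := by
  rw [D_mul h, D_inv h hu, hu]; ring

lemma D_add {i j : Fin n} (h : i ≠ j) (u b : MvPolynomial (Fin n) K) :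
    D i j (u + b) = D i j u + D i j b := by
  apply D_uniq h
  have h1 := D_spec i j u
  have h2 := D_spec i j b
  rw [map_add]
  linear_combination h1 + h2

/-- Dunkl operator -/
def T (γ : K) (i : Fin n) (ψ : MvPolynomial (Fin n) K) : MvPolynomial (Fin n) K :=
  pderiv i ψ + C γ * ∑ j ∈ Finset.univ.erase i, D i j ψ

lemma T_map {K' : Type*} [CommRing K'] [IsDomain K'] (φ : K →+* K') (γ : K) (i : Fin n)
    (g : MvPolynomial (Fin n) K) : map φ (T γ i g) = T (φ γ) i (map φ g) := by
  rw [T, T, map_add, map_mul, map_C, map_sum, pderiv_map]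
  congr 2
  refine Finset.sum_congr rfl fun j hj => D_map φ (Finset.ne_of_mem_erase hj).symm g

/-- weighted operator -/
def L (a b γ : K) (i : Fin n) (f : MvPolynomial (Fin n) K) : MvPolynomial (Fin n) K :=
  X i * (1 - X i) * pderiv i f + (C a * (1 - X i) - C b * X i) * f +
    C γ * ∑ j ∈ Finset.univ.erase i, D i j (X i * (1 - X i) * f)

lemma smul_mem_C {N : Submodule K (MvPolynomial (Fin n) K)} (c : K) {f : MvPolynomial (Fin n) K}
    (h : f ∈ N) : C c * f ∈ N := by
  rw [C_mul']; exact N.smul_mem c h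

theorem adj (N : Submodule K (MvPolynomial (Fin n) K)) (a b γ : K)
    (hS : ∀ i j f, f - sw i j f ∈ N) (hL : ∀ i f, L a b γ i f ∈ N)
    (h2 : ∀ f : MvPolynomial (Fin n) K, f + f ∈ N → f ∈ N)
    (i : Fin n) (φ ψ : MvPolynomial (Fin n) K) :
    φ * (X i * (1 - X i)) * T γ i ψ + L a b γ i φ * ψ ∈ N := by
  have key : φ * (X i * (1 - X i)) * T γ i ψ + L a b γ i φ * ψ = L a b γ i (φ * ψ) +
      C γ * ∑ j ∈ Finset.univ.erase i,
        (D i j (X i * (1 - X i) * φ) * (ψ - sw i j ψ)) := by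
    have : ∀ j ∈ Finset.univ.erase i, D i j (X i * (1 - X i) * (φ * ψ)) =
        φ * (X i * (1 - X i)) * D i j ψ + D i j (X i * (1 - X i) * φ) * ψ
          - D i j (X i * (1 - X i) * φ) * (ψ - sw i j ψ) := by
      intro j hj
      have hij := (Finset.ne_of_mem_erase hj).symm
      have h1 := D_spec i j (X i * (1 - X i) * φ)
      have h2 := D_spec i j ψ
      rw [← mul_assoc, D_mul hij]
      rw [h2]
      linear_combination D i j ψ * (-h1)
    simp only [L, T]
    rw [Finset.sum_congr rfl this, Finset.sum_sub_distrib, Finset.sum_add_distrib,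
      ← Finset.mul_sum, ← Finset.sum_mul, Derivation.leibniz]
    simp only [smul_eq_mul]
    ring
  rw [key]
  refine N.add_mem (hL _ _) (smul_mem_C _ (N.sum_mem fun j hj => ?_))
  have hij := (Finset.ne_of_mem_erase hj).symm
  apply h2
  have := hS i j (D i j (X i * (1 - X i) * φ) * (ψ - sw i j ψ))
  rw [map_mul, sw_D hij, map_sub, sw_sw] at this
  convert this using 1
  ring

/-- product of all `X (1-X)` -/
def ee (n : ℕ) (K : Type*) [CommRing K] : MvPolynomial (Fin n) K := ∏ i, (X i * (1 - X i))

lemma sw_ee (i j : Fin n) : sw i j (ee n K) = ee n K := by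
  simp only [ee, sw, map_prod, map_mul, map_sub, rename_X, map_one]
  exact Equiv.prod_comp (Equiv.swap i j) (fun i => (X i * (1 - X i) : MvPolynomial (Fin n) K))

lemma ee_split (i : Fin n) : ∃ r : MvPolynomial (Fin n) K, ee n K = r * (X i * (1 - X i)) ∧
    pderiv i r = 0 := by
  refine ⟨∏ j ∈ Finset.univ.erase i, (X j * (1 - X j)), ?_, ?_⟩
  · rw [ee, Finset.prod_erase_mul _ _ (Finset.mem_univ i)]
  · refine Finset.prod_induction _ (fun x => pderiv i x = 0) ?_ (by simp) ?_
    · intro a b ha hb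
      simp [Derivation.leibniz, ha, hb]
    · intro j hj
      have : j ≠ i := Finset.ne_of_mem_erase hj
      simp [Derivation.leibniz, pderiv_X, this]

lemma L_ee (a b γ : K) (i : Fin n) (f : MvPolynomial (Fin n) K) :
    L a b γ i (ee n K * f) = ee n K * (L a b γ i f + (1 - 2 * X i) * f) := by
  have : ∀ j ∈ Finset.univ.erase i, D i j (X i * (1 - X i) * (ee n K * f)) =
      ee n K * D i j (X i * (1 - X i) * f) := by
    intro j hj
    rw [← D_mul_inv (Finset.ne_of_mem_erase hj).symm (sw_ee i j)]
    congr 1; ring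
  obtain ⟨r, hr, hd⟩ := ee_split (K := K) i
  have h1 : X i * (1 - X i) * pderiv i (ee n K) = ee n K * (1 - 2 * X i) := by
    rw [hr, Derivation.leibniz, hd, Derivation.leibniz]
    simp [pderiv_X_self]
    ring
  rw [L, Finset.sum_congr rfl this, L, ← Finset.mul_sum, Derivation.leibniz]
  simp only [smul_eq_mul]
  linear_combination f * h1

lemma L_ee_pow (a b γ : K) (i : Fin n) (l : ℕ) : ∀ (f : MvPolynomial (Fin n) K),
    ∃ g, L a b γ i (ee n K ^ l * f) = ee n K ^ l * g := by
  induction l with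
  | zero => intro f; exact ⟨_, by simp; rfl⟩
  | succ l ih =>
    intro f
    obtain ⟨g, hg⟩ := ih f
    refine ⟨g + (1 - 2 * X i) * f, ?_⟩
    rw [pow_succ', mul_assoc, L_ee, hg]
    ring

/-- iterated Dunkl operators -/
def Tw (γ : K) : List (Fin n) → MvPolynomial (Fin n) K → MvPolynomial (Fin n) K
  | [], ψ => ψ
  | i :: w, ψ => T γ i (Tw γ w ψ)

theorem chain (N : Submodule K (MvPolynomial (Fin n) K)) (a b γ : K)
    (hS : ∀ i j f, f - sw i j f ∈ N) (hL : ∀ i f, L a b γ i f ∈ N)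
    (h2 : ∀ f : MvPolynomial (Fin n) K, f + f ∈ N → f ∈ N) (ψ : MvPolynomial (Fin n) K)
    (w : List (Fin n)) : ∀ φ : MvPolynomial (Fin n) K,
    ∃ g, φ * ee n K ^ w.length * Tw γ w ψ - g * ψ ∈ N := by
  induction w with
  | nil => intro φ; exact ⟨φ, by simp [Tw]⟩
  | cons i w ih =>
    intro φ
    obtain ⟨r, hr, -⟩ := ee_split (K := K) i
    obtain ⟨g, hg⟩ := L_ee_pow a b γ i w.length (φ * r)
    obtain ⟨g', hg'⟩ := ih (-g)
    refine ⟨g', ?_⟩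
    have h := adj N a b γ hS hL h2 i (ee n K ^ w.length * (φ * r)) (Tw γ w ψ)
    rw [hg] at h
    convert N.add_mem h hg' using 1
    rw [List.length_cons, pow_succ, Tw]
    nth_rewrite 2 [hr]
    ring

end SelA
set_option linter.unusedSectionVars false
namespace SelA
open MvPolynomial

variable {n : ℕ} {K : Type*} [CommRing K] [IsDomain K]

/-- partial product -/
def mm (u : Fin n → MvPolynomial (Fin n) K) (k : ℕ) : MvPolynomial (Fin n) K :=
  ∏ i ∈ Finset.univ.filter (fun i : Fin n => i.val < k), u i

lemma mm_succ (u : Fin n → MvPolynomial (Fin n) K) (i : Fin n) :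
    mm u (i.val + 1) = u i * mm u i.val := by
  have : (Finset.univ.filter (fun j : Fin n => j.val < i.val + 1)) =
      insert i (Finset.univ.filter (fun j : Fin n => j.val < i.val)) := by
    ext j
    simp [Fin.ext_iff]
    omega
  rw [mm, this, Finset.prod_insert (by simp)]; rfl

lemma sw_mm {u : Fin n → MvPolynomial (Fin n) K}
    (hsw : ∀ i j l, sw i j (u l) = u (Equiv.swap i j l)) (k : ℕ) (i j : Fin n)
    (h : i.val < k ↔ j.val < k) : sw i j (mm u k) = mm u k := by
  rw [mm, map_prod]
  simp_rw [hsw]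
  apply Finset.prod_bij (fun a _ => Equiv.swap i j a)
  · intro a ha
    simp only [Finset.mem_filter, Finset.mem_univ, true_and] at ha ⊢
    rcases eq_or_ne a i with rfl | h1
    · rw [Equiv.swap_apply_left]; exact h.1 ha
    rcases eq_or_ne a j with rfl | h2
    · rw [Equiv.swap_apply_right]; exact h.2 ha
    · rwa [Equiv.swap_apply_of_ne_of_ne h1 h2]
  · intro a _ b _ hab; exact (Equiv.swap i j).injective hab
  · intro b hb
    refine ⟨Equiv.swap i j b, ?_, by simp⟩
    simp only [Finset.mem_filter, Finset.mem_univ, true_and] at hb ⊢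
    rcases eq_or_ne b i with rfl | h1
    · rw [Equiv.swap_apply_left]; exact h.1 hb
    rcases eq_or_ne b j with rfl | h2
    · rw [Equiv.swap_apply_right]; exact h.2 hb
    · rwa [Equiv.swap_apply_of_ne_of_ne h1 h2]
  · intro a _; rfl

theorem astep (N : Submodule K (MvPolynomial (Fin n) K)) (a b γ ε : K)
    (u : Fin n → MvPolynomial (Fin n) K)
    (hS : ∀ i j f, f - sw i j f ∈ N)
    (hL : ∀ i f, u i * (1 - u i) * pderiv i f + C ε * (C a * (1 - u i) - C b * u i) * f +
      C γ * ∑ j ∈ Finset.univ.erase i, D i j (u i * (1 - u i) * f) ∈ N)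
    (hε : ε * ε = 1)
    (hsw : ∀ i j l, sw i j (u l) = u (Equiv.swap i j l))
    (hu : ∀ i j, u i - u j = C ε * (X i - X j))
    (hd : ∀ i j, i ≠ j → pderiv i (u j) = 0)
    (i : Fin n) (h : MvPolynomial (Fin n) K) :
    ∃ g, C (a + γ * ((n - 1 - i.val : ℕ) : K)) * (mm u i.val * h) - mm u (i.val + 1) * g ∈ N := by
  set m := mm u i.val with hm
  have hC : (C ε * C ε : MvPolynomial (Fin n) K) = 1 := by rw [← C_mul, hε, C_1]
  have hdm : pderiv i m = 0 := by
    refine Finset.prod_induction _ (fun x => pderiv i x = 0) ?_ (by simp) ?_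
    · intro a b ha hb
      simp [Derivation.leibniz, ha, hb]
    · intro j hj
      simp only [Finset.mem_filter, Finset.mem_univ, true_and] at hj
      exact hd i j (fun h => by subst h; exact lt_irrefl _ hj)
  have hj : ∀ j, ∃ G r, j ∈ Finset.univ.erase i → r ∈ N ∧
      D i j (u i * (1 - u i) * (m * h)) =
        (if i < j then C ε * (m * h) else 0) + u i * m * G + r := by
    intro j
    by_cases hij : j ∈ Finset.univ.erase i
    swap
    · exact ⟨0, 0, fun h => absurd h hij⟩
    have hne := (Finset.ne_of_mem_erase hij).symm
    rcases lt_or_gt_of_ne hne with hlt | hgt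
    · have hmi : sw i j m = m := sw_mm hsw _ _ _ (by
        have : i.val < j.val := hlt
        omega)
      refine ⟨- C ε * h + D i j ((1 - u i) * h), u j * m * D i j ((1 - u i) * h) -
        u i * m * D i j ((1 - u i) * h), fun _ => ⟨?_, ?_⟩⟩
      · have := hS i j (u j * m * D i j ((1 - u i) * h))
        rw [map_mul, map_mul, hsw, Equiv.swap_apply_right, hmi, sw_D hne] at this
        exact this
      · rw [if_pos hlt]
        have e1 : u i * (1 - u i) * (m * h) = m * (u i * ((1 - u i) * h)) := by ring
        have e2 : D i j (u i) = C ε := D_uniq hne (by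
          rw [hsw, Equiv.swap_apply_left, hu]; ring)
        rw [e1, D_mul_inv hne hmi, D_mul hne, e2, hsw, Equiv.swap_apply_left]
        ring
    · have hmi : sw i j (mm u (i.val + 1)) = mm u (i.val + 1) := sw_mm hsw _ _ _ (by
        have : j.val < i.val := hgt
        omega)
      refine ⟨D i j ((1 - u i) * h), 0, fun _ => ⟨N.zero_mem, ?_⟩⟩
      rw [if_neg (not_lt.2 hgt.le)]
      have e1 : u i * (1 - u i) * (m * h) = mm u (i.val + 1) * ((1 - u i) * h) := by
        rw [mm_succ]; ring
      rw [e1, D_mul_inv hne hmi, mm_succ]; ring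
  choose G r hGr using hj
  have hsum : ∑ j ∈ Finset.univ.erase i, D i j (u i * (1 - u i) * (m * h)) =
      C (((n - 1 - i.val : ℕ) : K)) * (C ε * (m * h)) + u i * m * (∑ j ∈ Finset.univ.erase i, G j) +
        ∑ j ∈ Finset.univ.erase i, r j := by
    rw [Finset.sum_congr rfl (fun j hj => (hGr j hj).2), Finset.sum_add_distrib,
      Finset.sum_add_distrib, ← Finset.mul_sum, ← Finset.sum_filter, Finset.sum_const]
    congr 2
    have : (Finset.univ.erase i).filter (fun j => i < j) = Finset.Ioi i := by
      ext j
      simp only [Finset.mem_filter, Finset.mem_erase, Finset.mem_univ, and_true, Finset.mem_Ioi]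
      exact ⟨fun h => h.2, fun h => ⟨h.ne', h⟩⟩
    rw [this, Fin.card_Ioi, nsmul_eq_mul]
    simp
  have hr : ∑ j ∈ Finset.univ.erase i, r j ∈ N := N.sum_mem fun j hj => (hGr j hj).1
  have hL' := hL i (m * h)
  rw [hsum, Derivation.leibniz, hdm] at hL'
  refine ⟨- C ε * ((1 - u i) * pderiv i h - C ε * (C a + C b) * h +
    C γ * ∑ j ∈ Finset.univ.erase i, G j), ?_⟩
  have := N.sub_mem (smul_mem_C ε hL') (smul_mem_C (ε * γ) hr)
  convert this using 1
  rw [mm_succ, ← hm]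
  simp only [C_mul, C_add, smul_eq_mul]
  linear_combination (C a * (1 - u i) * m * h - C b * u i * m * h - u i * m * h * -(C a + C b) +
    C γ * C (((n - 1 - i.val : ℕ) : K)) * m * h ) * (-hC)

theorem asteps (N : Submodule K (MvPolynomial (Fin n) K)) (a b γ ε : K)
    (u : Fin n → MvPolynomial (Fin n) K)
    (hS : ∀ i j f, f - sw i j f ∈ N)
    (hL : ∀ i f, u i * (1 - u i) * pderiv i f + C ε * (C a * (1 - u i) - C b * u i) * f +
      C γ * ∑ j ∈ Finset.univ.erase i, D i j (u i * (1 - u i) * f) ∈ N)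
    (hε : ε * ε = 1)
    (hsw : ∀ i j l, sw i j (u l) = u (Equiv.swap i j l))
    (hu : ∀ i j, u i - u j = C ε * (X i - X j))
    (hd : ∀ i j, i ≠ j → pderiv i (u j) = 0)
    (f : MvPolynomial (Fin n) K) :
    ∃ g, C (∏ i : Fin n, (a + γ * ((n - 1 - i.val : ℕ) : K))) * f - (∏ i, u i) * g ∈ N := by
  have key : ∀ k ≤ n, ∃ g, C (∏ i ∈ Finset.univ.filter (fun i : Fin n => i.val < k),
      (a + γ * ((n - 1 - i.val : ℕ) : K))) * f - mm u k * g ∈ N := by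
    intro k
    induction k with
    | zero => intro _; exact ⟨f, by simp [mm]⟩
    | succ k ih =>
      intro hk
      obtain ⟨g, hg⟩ := ih (by omega)
      obtain ⟨g', hg'⟩ := astep N a b γ ε u hS hL hε hsw hu hd ⟨k, hk⟩ g
      refine ⟨g', ?_⟩
      have h1 : (Finset.univ.filter (fun j : Fin n => j.val < k + 1)) =
          insert ⟨k, hk⟩ (Finset.univ.filter (fun j : Fin n => j.val < k)) := by
        ext j
        simp [Fin.ext_iff]
        omega
      rw [h1, Finset.prod_insert (by simp)]
      convert N.add_mem (smul_mem_C (a + γ * ((n - 1 - k : ℕ) : K)) hg) hg' using 1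
      simp only [C_mul]
      ring
  obtain ⟨g, hg⟩ := key n le_rfl
  refine ⟨g, ?_⟩
  simpa [mm] using hg

end SelA
set_option linter.unusedSectionVars false
set_option linter.unusedSimpArgs false
set_option linter.unusedVariables false
namespace SelA
open MvPolynomial

variable {n : ℕ} {K : Type*} [CommRing K] [IsDomain K]

/-- swapped exponent -/
def swf (i j : Fin n) (μ : Fin n →₀ ℕ) : Fin n →₀ ℕ := μ.mapDomain (Equiv.swap i j)

lemma swf_apply (i j k : Fin n) (μ : Fin n →₀ ℕ) : swf i j μ k = μ (Equiv.swap i j k) := by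
  rw [swf, Finsupp.mapDomain_equiv_apply, Equiv.symm_swap]

lemma swf_swf (i j : Fin n) (μ : Fin n →₀ ℕ) : swf i j (swf i j μ) = μ := by
  ext k; simp [swf_apply]

lemma coeff_sw (i j : Fin n) (μ : Fin n →₀ ℕ) (ψ : MvPolynomial (Fin n) K) :
    coeff μ (sw i j ψ) = coeff (swf i j μ) ψ := by
  conv_lhs => rw [← swf_swf i j μ]
  rw [sw]
  exact coeff_rename_mapDomain _ (Equiv.injective _) _ _

lemma coeff_D_eq (i j : Fin n) (μ : Fin n →₀ ℕ) (ψ : MvPolynomial (Fin n) K) :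
    coeff μ ψ - coeff (swf i j μ) ψ = coeff μ (X i * D i j ψ) - coeff μ (X j * D i j ψ) := by
  have := congrArg (coeff μ) (D_spec i j ψ)
  rwa [coeff_sub, coeff_sw, sub_mul, coeff_sub] at this

lemma coeff_D_zero {i j : Fin n} (h : i ≠ j) (ν : Fin n →₀ ℕ) (hν : ν j = 0)
    (ψ : MvPolynomial (Fin n) K) :
    coeff ν (D i j ψ) = coeff (ν + Finsupp.single i 1) ψ -
      coeff (swf i j (ν + Finsupp.single i 1)) ψ := by
  rw [coeff_D_eq, add_comm ν, coeff_X_mul, coeff_X_mul', if_neg, sub_zero]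
  simp [hν, Finsupp.single_apply, h]

lemma coeff_D_rec {i j : Fin n} (h : i ≠ j) (ψ : MvPolynomial (Fin n) K)
    (P : (Fin n →₀ ℕ) → Prop)
    (h1 : ∀ ν, P ν → coeff (ν + Finsupp.single j 1) ψ = 0)
    (h2 : ∀ ν, P ν → coeff (swf i j (ν + Finsupp.single j 1)) ψ = 0)
    (h3 : ∀ κ, P (κ + Finsupp.single i 1) → P (κ + Finsupp.single j 1)) :
    ∀ (k : ℕ) (ν : Fin n →₀ ℕ), ν i = k → P ν → coeff ν (D i j ψ) = 0 := by
  intro k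
  induction k with
  | zero =>
    intro ν hk hP
    have := coeff_D_eq i j (ν + Finsupp.single j 1) ψ
    rw [h1 ν hP, h2 ν hP, add_comm ν, coeff_X_mul, coeff_X_mul', if_neg] at this
    · simpa using this
    · simp [hk, Finsupp.single_apply, h.symm]
  | succ k ih =>
    intro ν hk hP
    obtain ⟨κ, rfl⟩ : ∃ κ : Fin n →₀ ℕ, ν = κ + Finsupp.single i 1 := by
      refine ⟨ν - Finsupp.single i 1, ?_⟩
      rw [tsub_add_cancel_of_le]
      rw [Finsupp.single_le_iff]; omega
    have := coeff_D_eq i j (κ + Finsupp.single i 1 + Finsupp.single j 1) ψ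
    rw [h1 _ hP, h2 _ hP, add_comm _ (Finsupp.single j 1), coeff_X_mul,
      show Finsupp.single j 1 + (κ + Finsupp.single i 1) =
        Finsupp.single i 1 + (κ + Finsupp.single j 1) by abel, coeff_X_mul,
      ih _ _ (h3 _ hP)] at this
    · simpa using this
    · simp [Finsupp.single_apply, h.symm] at hk ⊢
      omega

/-- sum of squares -/
def sq (μ : Fin n →₀ ℕ) : ℕ := ∑ k, (μ k) ^ 2

lemma sq_add (μ : Fin n →₀ ℕ) (i : Fin n) : sq (μ + Finsupp.single i 1) = sq μ + 2 * μ i + 1 := by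
  unfold sq
  rw [← Finset.add_sum_erase _ _ (Finset.mem_univ i), ← Finset.add_sum_erase _ _ (Finset.mem_univ i)]
  have : ∑ k ∈ Finset.univ.erase i, ((μ + Finsupp.single i 1 : Fin n →₀ ℕ) k) ^ 2 =
      ∑ k ∈ Finset.univ.erase i, (μ k) ^ 2 := by
    refine Finset.sum_congr rfl fun k hk => ?_
    simp [Finsupp.single_apply, (Finset.ne_of_mem_erase hk).symm]
  rw [this]; simp; ring

lemma sq_swf (i j : Fin n) (μ : Fin n →₀ ℕ) : sq (swf i j μ) = sq μ := by
  unfold sq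
  simp only [swf_apply]
  exact Equiv.sum_comp (Equiv.swap i j) (fun k => (μ k) ^ 2)

lemma coeff_D_sq {i j : Fin n} (h : i ≠ j) (ψ : MvPolynomial (Fin n) K) (M : ℕ)
    (hM : ∀ μ, M < sq μ → coeff μ ψ = 0) (ν : Fin n →₀ ℕ) (hν : ν i < ν j)
    (hs : M ≤ sq (ν + Finsupp.single i 1)) : coeff ν (D i j ψ) = 0 := by
  refine coeff_D_rec h ψ (fun ν => ν i < ν j ∧ M ≤ sq (ν + Finsupp.single i 1)) ?_ ?_ ?_ _ ν rfl
    ⟨hν, hs⟩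
  · rintro ν ⟨h1, h2⟩
    apply hM
    rw [sq_add] at h2 ⊢; omega
  · rintro ν ⟨h1, h2⟩
    apply hM
    rw [sq_swf]
    rw [sq_add] at h2 ⊢; omega
  · rintro κ ⟨h1, h2⟩
    simp only [sq_add, Finsupp.add_apply, Finsupp.single_apply, h, h.symm, if_true, if_false] at *
    omega

lemma degree_swf (i j : Fin n) (μ : Fin n →₀ ℕ) : (swf i j μ).degree = μ.degree := by
  simp only [Finsupp.degree_eq_sum, swf_apply]
  exact Equiv.sum_comp (Equiv.swap i j) (fun k => (μ k))

lemma D_hom {i j : Fin n} (h : i ≠ j) {ψ : MvPolynomial (Fin n) K} {m : ℕ}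
    (hψ : ψ.IsHomogeneous (m + 1)) : (D i j ψ).IsHomogeneous m := by
  have key : ∀ ν : Fin n →₀ ℕ, ν.degree ≠ m → coeff ν (D i j ψ) = 0 := by
    intro ν hν
    refine coeff_D_rec h ψ (fun ν => ν.degree ≠ m) ?_ ?_ ?_ _ ν rfl hν
    · intro ν hν
      apply hψ.coeff_eq_zero
      simpa using hν
    · intro ν hν
      apply hψ.coeff_eq_zero
      rw [degree_swf]
      simpa using hν
    · intro κ; simp
  intro ν hν
  by_contra h'
  apply hν
  apply key
  intro h2
  apply h'
  rw [← h2, Finsupp.degree_eq_weight_one]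
  rfl

lemma T_hom (γ : K) (i : Fin n) {ψ : MvPolynomial (Fin n) K} {m : ℕ}
    (hψ : ψ.IsHomogeneous (m + 1)) : (T γ i ψ).IsHomogeneous m := by
  refine IsHomogeneous.add (hψ.pderiv) ?_
  have := (isHomogeneous_C (Fin n) γ).mul (IsHomogeneous.sum (Finset.univ.erase i) (fun j => D i j ψ) m
    (fun j hj => D_hom (Finset.ne_of_mem_erase hj).symm hψ))
  simpa using this

lemma Tw_hom (γ : K) (w : List (Fin n)) : ∀ {ψ : MvPolynomial (Fin n) K} {m : ℕ},
    ψ.IsHomogeneous (m + w.length) → (Tw γ w ψ).IsHomogeneous m := by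
  induction w with
  | nil => intro ψ m h; simpa [Tw] using h
  | cons i w ih =>
    intro ψ m h
    refine T_hom γ i (ih ?_)
    have : m + 1 + w.length = m + (i :: w).length := by simp; ring
    rwa [this]

lemma Tw_map {K' : Type*} [CommRing K'] [IsDomain K'] (φ : K →+* K') (γ : K) (w : List (Fin n))
    (g : MvPolynomial (Fin n) K) : map φ (Tw γ w g) = Tw (φ γ) w (map φ g) := by
  induction w with
  | nil => rfl
  | cons i w ih => rw [Tw, Tw, T_map, ih]

theorem no_sing (γ : ℂ) (hγ : ∀ t : ℕ, 2 ≤ t → t ≤ n → ∀ v : ℕ, 1 ≤ v → (v : ℂ) + γ * t ≠ 0)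
    (ψ : MvPolynomial (Fin n) ℂ) (hT : ∀ i, T γ i ψ = 0) (η : Fin n →₀ ℕ) (hη0 : η ≠ 0)
    (hηc : coeff η ψ ≠ 0) : False := by
  obtain ⟨η', hη's, hmax⟩ := Finset.exists_max_image ψ.support sq ⟨η, mem_support_iff.2 hηc⟩
  have hη'0 : η' ≠ 0 := by
    rintro rfl
    have := hmax η (mem_support_iff.2 hηc)
    apply hη0
    ext k
    have h2 : sq η = 0 := by simpa [sq] using this
    simp only [sq, Finset.sum_eq_zero_iff] at h2
    have := h2 k (Finset.mem_univ _)
    simpa using this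
  clear hη0 hηc
  have hne : η'.support.Nonempty := Finsupp.support_nonempty_iff.2 hη'0
  obtain ⟨i, hi, hmin⟩ := Finset.exists_min_image η'.support (fun k => η' k) hne
  set v := η' i with hv
  have hv0 : 1 ≤ v := Nat.one_le_iff_ne_zero.2 (Finsupp.mem_support_iff.1 hi)
  obtain ⟨u, hu⟩ : ∃ u, v = u + 1 := ⟨v - 1, by omega⟩
  set ρ := η'.erase i with hρ
  have hη'ρ : η' = ρ + Finsupp.single i v := by
    rw [hρ, hv, Finsupp.erase_add_single]
  set Z := Finset.univ.filter (fun k => ρ k = 0) with hZ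
  have hiZ : i ∈ Z := by simp [hZ, hρ]
  set x : Fin n → ℂ := fun k => coeff (ρ + Finsupp.single k v) ψ with hx
  have hM : ∀ μ, sq η' < sq μ → coeff μ ψ = 0 := by
    intro μ hμ
    by_contra h
    have := hmax μ (mem_support_iff.2 h)
    omega
  have hsw : ∀ k ∈ Z, ∀ j ∈ Z, swf k j (ρ + Finsupp.single k v) = ρ + Finsupp.single j v := by
    intro k hk j hj
    simp only [hZ, Finset.mem_filter, Finset.mem_univ, true_and] at hk hj
    ext l
    rw [swf_apply]
    rcases eq_or_ne l k with rfl | h1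
    · rw [Equiv.swap_apply_left]
      simp only [Finsupp.add_apply, Finsupp.single_apply, hk, hj]
      simp [eq_comm]
    rcases eq_or_ne l j with rfl | h2
    · rw [Equiv.swap_apply_right]
      simp [hk, hj]
    · rw [Equiv.swap_apply_of_ne_of_ne h1 h2]
      simp [Finsupp.single_apply, h1.symm, h2.symm]
  have hsq : ∀ k ∈ Z, sq (ρ + Finsupp.single k v) = sq η' := by
    intro k hk
    rw [hη'ρ, ← hsw i hiZ k hk, sq_swf]
  have hρv : ∀ j ∉ Z, v ≤ ρ j := by
    intro j hj
    simp only [hZ, Finset.mem_filter, Finset.mem_univ, true_and] at hj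
    have hji : j ≠ i := by rintro rfl; apply hj; simp [hρ]
    have : ρ j = η' j := by simp [hρ, hji]
    rw [this] at hj ⊢
    exact hmin j (Finsupp.mem_support_iff.2 hj)
  have eqk : ∀ k ∈ Z, (v : ℂ) * x k + γ * (Z.card * x k - ∑ j ∈ Z, x j) = 0 := by
    intro k hk
    have hk' : ρ k = 0 := by simpa [hZ] using hk
    have hν : ρ + Finsupp.single k u + Finsupp.single k 1 = ρ + Finsupp.single k v := by
      rw [add_assoc, ← Finsupp.single_add, hu]
    have h0 := congrArg (coeff (ρ + Finsupp.single k u)) (hT k)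
    rw [T, coeff_add, coeff_C_mul, coeff_sum, coeff_pderiv, coeff_zero, hν] at h0
    have hs : ∑ j ∈ Finset.univ.erase k, coeff (ρ + Finsupp.single k u) (D k j ψ) =
        Z.card * x k - ∑ j ∈ Z, x j := by
      have h1 : ∀ j ∈ Finset.univ.erase k, coeff (ρ + Finsupp.single k u) (D k j ψ) =
          if j ∈ Z then x k - x j else 0 := by
        intro j hj
        have hjk := Finset.ne_of_mem_erase hj
        split_ifs with hjZ
        · have hj' : ρ j = 0 := by simpa [hZ] using hjZ
          rw [coeff_D_zero hjk.symm _ (by simp [hj', Finsupp.single_apply, hjk.symm]), hν,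
            hsw k hk j hjZ]
        · refine coeff_D_sq hjk.symm ψ (sq η') hM _ ?_ ?_
          · have := hρv j hjZ
            simp [hk', Finsupp.single_apply, hjk.symm]; omega
          · rw [hν, hsq k hk]
      rw [Finset.sum_congr rfl h1]
      have h2 : ∑ j ∈ Finset.univ.erase k, (if j ∈ Z then x k - x j else 0) =
          ∑ j, (if j ∈ Z then x k - x j else 0) := by
        rw [← Finset.add_sum_erase _ _ (Finset.mem_univ k)]; simp
      rw [h2, Finset.sum_ite_mem, Finset.univ_inter, Finset.sum_sub_distrib]; simp
    rw [hs] at h0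
    have h3 : (((ρ + Finsupp.single k u) k : ℕ) : ℂ) + 1 = v := by
      rw [hu]; simp [hk']
    rw [h3] at h0
    rw [← h0, hx]; ring
  have hsum : ∑ j ∈ Z, x j = 0 := by
    have := Finset.sum_eq_zero eqk
    rw [Finset.sum_add_distrib, ← Finset.mul_sum, ← Finset.mul_sum, Finset.sum_sub_distrib,
      ← Finset.mul_sum, Finset.sum_const, nsmul_eq_mul, sub_self, mul_zero, add_zero] at this
    rcases mul_eq_zero.1 this with h | h
    · exfalso; have : v = 0 := by exact_mod_cast h
      omega
    · exact h
  have hxi : x i ≠ 0 := by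
    rw [hx]; simp only; rw [← hη'ρ]; exact mem_support_iff.1 hη's
  have e := eqk i hiZ
  rw [hsum] at e
  have e' : ((v : ℂ) + γ * Z.card) * x i = 0 := by rw [← e]; ring
  rcases mul_eq_zero.1 e' with h | h
  · by_cases h1 : 2 ≤ Z.card
    · refine hγ Z.card h1 ?_ v hv0 h
      exact (Finset.card_le_univ Z).trans (by simp)
    · have hc : Z.card = 1 := by
        have : 0 < Z.card := Finset.card_pos.2 ⟨i, hiZ⟩
        omega
      obtain ⟨a, ha⟩ := Finset.card_eq_one.1 hc
      rw [ha] at hiZ hsum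
      simp at hiZ hsum
      rw [← hiZ] at hsum
      exact hxi hsum
  · exact hxi h

theorem exists_word (γ : ℂ)
    (hγ : ∀ t : ℕ, 2 ≤ t → t ≤ n → ∀ v : ℕ, 1 ≤ v → (v : ℂ) + γ * t ≠ 0) (m : ℕ) :
    ∀ (ψ : MvPolynomial (Fin n) ℂ), ψ.IsHomogeneous m → ψ ≠ 0 →
      ∃ w : List (Fin n), w.length = m ∧ Tw γ w ψ ≠ 0 := by
  induction m with
  | zero => intro ψ _ h; exact ⟨[], rfl, h⟩
  | succ m ih =>
    intro ψ hψ h0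
    obtain ⟨i, hi⟩ : ∃ i, T γ i ψ ≠ 0 := by
      by_contra hc
      push Not at hc
      obtain ⟨η, hη⟩ := MvPolynomial.ne_zero_iff.1 h0
      refine no_sing γ hγ ψ hc η ?_ hη
      rintro rfl
      apply hη
      apply hψ.coeff_eq_zero
      simp
    obtain ⟨w, hw, hw'⟩ := ih _ (T_hom γ i hψ) hi
    refine ⟨w ++ [i], by simp [hw], ?_⟩
    have : ∀ (w : List (Fin n)), Tw γ (w ++ [i]) ψ = Tw γ w (T γ i ψ) := by
      intro w
      induction w with
      | nil => rfl
      | cons a w ih => rw [List.cons_append, Tw, ih, Tw]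
    rwa [this]

/-- product of all differences -/
def EE (n : ℕ) (K : Type*) [CommRing K] : MvPolynomial (Fin n) K :=
  ∏ q ∈ (Finset.univ : Finset (Fin n)).offDiag, (X q.1 - X q.2)

lemma EE_ne : EE n K ≠ 0 :=
  Finset.prod_ne_zero_iff.2 fun q hq => X_sub_ne (Finset.mem_offDiag.1 hq).2.2

lemma EE_hom : ∃ M, (EE n K ^ 2).IsHomogeneous M := by
  refine ⟨_, IsHomogeneous.pow (IsHomogeneous.prod _ _ (fun _ => 1) ?_) 2⟩
  intro q _
  exact (isHomogeneous_X _ _).sub (isHomogeneous_X _ _)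

lemma EE_map {K' : Type*} [CommRing K'] (φ : K →+* K') : map φ (EE n K) = EE n K' := by
  simp [EE, map_prod]

/-- The `γ`-shift relation with nonvanishing constant at a given specialization. -/
theorem gamma_rel (N : Submodule K (MvPolynomial (Fin n) K)) (a b γ : K)
    (hS : ∀ i j f, f - sw i j f ∈ N) (hL : ∀ i f, L a b γ i f ∈ N)
    (h2 : ∀ f : MvPolynomial (Fin n) K, f + f ∈ N → f ∈ N) :
    ∃ (M : ℕ), ∀ φ0 : K →+* ℂ,
    (∀ t : ℕ, 2 ≤ t → t ≤ n → ∀ v : ℕ, 1 ≤ v → (v : ℂ) + φ0 γ * t ≠ 0) →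
    ∃ (c : K), φ0 c ≠ 0 ∧ ∀ f : MvPolynomial (Fin n) K,
      ∃ g, C c * (f * ee n K ^ M) - g * EE n K ^ 2 ∈ N := by
  obtain ⟨M, hM⟩ := EE_hom (n := n) (K := K)
  refine ⟨M, fun φ0 hγ => ?_⟩
  have hM' : (map φ0 (EE n K ^ 2)).IsHomogeneous M := hM.map φ0
  obtain ⟨w, hw, hw0⟩ := exists_word (φ0 γ) hγ M _ hM' (by
    rw [map_pow, EE_map]; exact pow_ne_zero _ EE_ne)
  have h0 : (Tw γ w (EE n K ^ 2)).IsHomogeneous 0 := Tw_hom γ w (by simpa [hw] using hM)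
  have h0' : Tw γ w (EE n K ^ 2) = C (coeff 0 (Tw γ w (EE n K ^ 2))) := by
    rw [← totalDegree_eq_zero_iff_eq_C]
    exact Nat.le_zero.1 h0.totalDegree_le
  refine ⟨coeff 0 (Tw γ w (EE n K ^ 2)), ?_, ?_⟩
  · intro h
    apply hw0
    rw [← Tw_map, h0', map_C, h, C_0]
  · intro f
    obtain ⟨g, hg⟩ := chain N a b γ hS hL h2 (EE n K ^ 2) w f
    refine ⟨g, ?_⟩
    rw [hw] at hg
    rw [h0'] at hg
    rwa [mul_comm (C _)]

end SelA
namespace SelE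

/-- parameter space -/
abbrev P3 := ℂ × ℂ × ℂ

/-- half-space -/
def Hs (a1 a2 b : ℝ) : Set P3 := {p | a1 < p.1.re ∧ a2 < p.2.1.re ∧ b < p.2.2.re}

lemma Hs_open (a1 a2 b : ℝ) : IsOpen (Hs a1 a2 b) := by
  have h1 : IsOpen {p : P3 | a1 < p.1.re} := isOpen_lt (by fun_prop) (by fun_prop)
  have h2 : IsOpen {p : P3 | a2 < p.2.1.re} := isOpen_lt (by fun_prop) (by fun_prop)
  have h3 : IsOpen {p : P3 | b < p.2.2.re} := isOpen_lt (by fun_prop) (by fun_prop)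
  exact h1.inter (h2.inter h3)

lemma intcl : IsClosed (Set.range (fun m : ℤ => (m : ℂ))) := by
  exact Complex.isClosed_range_intCast

lemma setAhat_eq (n : ℕ) : setAhat n =
    (⋃ j ∈ Finset.Icc 1 n, ((fun p : P3 => p.1 + ((j : ℂ) - 1) * p.2.2) ⁻¹' Set.range (fun m : ℤ => (m : ℂ))
      ∪ (fun p : P3 => p.2.1 + ((j : ℂ) - 1) * p.2.2) ⁻¹' Set.range (fun m : ℤ => (m : ℂ)))) ∪
    ⋃ j ∈ Finset.Icc 1 (n - 1), (fun p : P3 => ((j : ℂ) + 1) * p.2.2) ⁻¹' Set.range (fun m : ℤ => (m : ℂ)) := by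
  ext p
  simp only [setAhat, Set.mem_ofPred_eq, Set.mem_union, Set.mem_iUnion, Finset.mem_Icc,
    Set.mem_preimage, Set.mem_range, exists_prop, and_assoc, eq_comm]

lemma Om_open (n : ℕ) : IsOpen (setAhat n)ᶜ := by
  rw [isOpen_compl_iff, setAhat_eq]
  refine IsClosed.union (isClosed_biUnion_finset fun j _ => IsClosed.union ?_ ?_)
    (isClosed_biUnion_finset fun j _ => ?_)
  all_goals exact intcl.preimage (by fun_prop)

lemma lin_countable (a b : ℂ) (hb : b ≠ 0) :
    {t : ℂ | a + b * t ∈ Set.range (fun m : ℤ => (m : ℂ))}.Countable := by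
  refine Set.Countable.preimage_of_injOn (f := fun t => a + b * t) (Set.countable_range _) ?_
  intro x _ y _ h
  have : b * x = b * y := by simpa using h
  exact mul_left_cancel₀ hb this

/-- diagonal direction -/
def dd (p : P3) (t : ℂ) : P3 := p + (t, t, t)

lemma line_countable (n : ℕ) (p : P3) : {t : ℂ | dd p t ∈ setAhat n}.Countable := by
  have : {t : ℂ | dd p t ∈ setAhat n} ⊆
      (⋃ j ∈ Finset.Icc 1 n, ({t : ℂ | (p.1 + ((j : ℂ) - 1) * p.2.2) + (j : ℂ) * t ∈ Set.range (fun m : ℤ => (m : ℂ))}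
      ∪ {t : ℂ | (p.2.1 + ((j : ℂ) - 1) * p.2.2) + (j : ℂ) * t ∈ Set.range (fun m : ℤ => (m : ℂ))})) ∪
    ⋃ j ∈ Finset.Icc 1 (n - 1), {t : ℂ | (((j : ℂ) + 1) * p.2.2) + ((j : ℂ) + 1) * t ∈ Set.range (fun m : ℤ => (m : ℂ))} := by
    intro t ht
    rw [Set.mem_ofPred_eq, setAhat_eq] at ht
    simp only [Set.mem_union, Set.mem_iUnion, Set.mem_preimage, Set.mem_ofPred_eq, dd, Prod.fst_add,
      Prod.snd_add] at ht ⊢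
    rcases ht with ⟨j, hj, h⟩ | ⟨j, hj, h⟩
    · left; refine ⟨j, hj, ?_⟩
      rcases h with h | h
      · left; convert h using 1; ring
      · right; convert h using 1; ring
    · right; refine ⟨j, hj, ?_⟩
      convert h using 1; ring
  refine Set.Countable.mono this (Set.Countable.union ?_ ?_)
  · refine (Finset.countable_toSet _).biUnion fun j hj => ?_
    have : (j : ℂ) ≠ 0 := by
      have := (Finset.mem_Icc.1 hj).1
      exact_mod_cast (by omega : j ≠ 0)
    exact (lin_countable _ _ this).union (lin_countable _ _ this)
  · refine (Finset.countable_toSet _).biUnion fun j hj => lin_countable _ _ ?_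
    exact_mod_cast (by omega : j + 1 ≠ 0)

lemma precon (τ : ℝ) (S : Set ℂ) (hS : S.Countable) : IsPreconnected ({t : ℂ | τ < t.re} ∩ Sᶜ) := by
  let φ : ℂ → ℂ := fun s => ⟨τ + Real.exp s.re, s.im⟩
  have hinj : Function.Injective φ := by
    intro x y h
    have h1 := congrArg Complex.re h
    have h2 := congrArg Complex.im h
    simp only [φ, add_right_inj, Real.exp_eq_exp] at h1 h2
    exact Complex.ext h1 h2
  have hcont : Continuous φ := by
    have : φ = fun s => ((τ + Real.exp s.re : ℝ) : ℂ) + (s.im : ℂ) * I := by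
      funext s; exact Complex.mk_eq_add_mul_I _ _
    rw [this]
    fun_prop
  have h1 : IsPreconnected (φ ⁻¹' S)ᶜ :=
    ((hS.preimage_of_injOn hinj.injOn).isConnected_compl_of_one_lt_rank
      (by rw [Complex.rank_real_complex]; norm_num)).isPreconnected
  convert h1.image φ hcont.continuousOn using 1
  ext t
  simp only [Set.mem_inter_iff, Set.mem_ofPred_eq, Set.mem_compl_iff, Set.mem_image, Set.mem_preimage]
  constructor
  · rintro ⟨h, h'⟩
    have ht : φ ⟨Real.log (t.re - τ), t.im⟩ = t := by
      apply Complex.ext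
      · simp only [φ]; rw [Real.exp_log (by linarith)]; ring
      · rfl
    exact ⟨_, by rwa [ht], ht⟩
  · rintro ⟨s, hs, rfl⟩
    refine ⟨?_, hs⟩
    simp only [φ]; have := Real.exp_pos s.re; linarith

theorem uniq (n : ℕ) (a1 a2 b K : ℝ) (F G : P3 → ℂ)
    (hF : AnalyticOnNhd ℂ F ((setAhat n)ᶜ ∩ Hs a1 a2 b))
    (hG : AnalyticOnNhd ℂ G ((setAhat n)ᶜ ∩ Hs a1 a2 b))
    (h : ∀ p ∈ (setAhat n)ᶜ ∩ Hs K K K, F p = G p) :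
    ∀ p ∈ (setAhat n)ᶜ ∩ Hs a1 a2 b, F p = G p := by
  intro p hp
  set S := {t : ℂ | dd p t ∈ setAhat n} with hS
  obtain ⟨hpO, hp1, hp2, hp3⟩ := hp
  set τ := max (a1 - p.1.re) (max (a2 - p.2.1.re) (b - p.2.2.re)) with hτ
  have hτ0 : τ < 0 := by simp only [hτ, max_lt_iff]; refine ⟨?_, ?_, ?_⟩ <;> linarith
  have hre : ∀ t : ℂ, τ < t.re → dd p t ∈ Hs a1 a2 b := by
    intro t ht
    simp only [hτ, max_lt_iff] at ht
    refine ⟨?_, ?_, ?_⟩ <;> simp only [dd, Prod.fst_add, Prod.snd_add, Complex.add_re] <;> linarith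
  have hU := precon τ S (line_countable n p)
  have hdan : ∀ t, AnalyticAt ℂ (dd p) t := by
    intro t; unfold dd; fun_prop
  set K' := max τ (max (K - p.1.re) (max (K - p.2.1.re) (K - p.2.2.re))) with hK'
  obtain ⟨t0, ht0, ht0S⟩ : ∃ t0 : ℂ, K' < t0.re ∧ t0 ∉ S := by
    have h1 : ¬ {t : ℂ | K' < t.re}.Countable := by
      intro hc
      have ho : IsOpen {t : ℂ | K' < t.re} := isOpen_lt (by fun_prop) (by fun_prop)
      have hn : {t : ℂ | K' < t.re}.Nonempty := ⟨((K' + 1 : ℝ) : ℂ), by simp⟩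
      have h2 := Set.Countable.dense_compl ℝ hc
      obtain ⟨x, hx, hx'⟩ := h2.inter_open_nonempty _ ho hn
      exact hx' hx
    by_contra hc
    push Not at hc
    exact h1 ((line_countable n p).mono hc)
  have hreK : ∀ t : ℂ, K' < t.re → dd p t ∈ Hs K K K := by
    intro t ht
    simp only [hK', max_lt_iff] at ht
    refine ⟨?_, ?_, ?_⟩ <;> simp only [dd, Prod.fst_add, Prod.snd_add, Complex.add_re] <;> linarith
  have hm : ∀ t ∈ {t : ℂ | τ < t.re} ∩ Sᶜ, dd p t ∈ (setAhat n)ᶜ ∩ Hs a1 a2 b :=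
    fun t ht => ⟨ht.2, hre t ht.1⟩
  have h1 : AnalyticOnNhd ℂ (fun t => F (dd p t)) ({t : ℂ | τ < t.re} ∩ Sᶜ) :=
    fun t ht => (hF _ (hm t ht)).comp (hdan t)
  have h2 : AnalyticOnNhd ℂ (fun t => G (dd p t)) ({t : ℂ | τ < t.re} ∩ Sᶜ) :=
    fun t ht => (hG _ (hm t ht)).comp (hdan t)
  have hτK : τ ≤ K' := le_max_left _ _
  have h3 := h1.eqOn_of_preconnected_of_eventuallyEq h2 hU (z₀ := t0)
    ⟨lt_of_le_of_lt hτK ht0, ht0S⟩ (by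
      have hd : ContinuousAt (dd p) t0 := (hdan t0).continuousAt
      have := hd.eventually (((Om_open n).inter (Hs_open K K K)).mem_nhds ⟨ht0S, hreK t0 ht0⟩)
      filter_upwards [this] with t ht using h _ ht)
  have hd0 : dd p 0 = p := by simp [dd]
  have := h3 (x := 0) ⟨by simpa using hτ0, by simpa [hS, hd0] using hpO⟩
  simpa [hd0] using this

theorem glue (n : ℕ) (I : P3 → ℂ) (hI : AnalyticOnNhd ℂ I (Hs (-1) (-1) 0)) (S : Set P3)
    (hSo : IsOpen S) (hSO : S ⊆ (setAhat n)ᶜ)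
    (h : ∀ p0 ∈ S, ∃ (a1 a2 b K : ℝ) (c G : P3 → ℂ), p0 ∈ Hs a1 a2 b ∧
      AnalyticOnNhd ℂ c Set.univ ∧ c p0 ≠ 0 ∧ AnalyticOnNhd ℂ G ((setAhat n)ᶜ ∩ Hs a1 a2 b) ∧
      ∀ p ∈ (setAhat n)ᶜ ∩ Hs K K K, c p * I p = G p) :
    ∃ F : P3 → ℂ, AnalyticOnNhd ℂ F S ∧ ∀ p ∈ S ∩ Hs (-1) (-1) 0, F p = I p := by
  classical
  choose! a1 a2 b K c G h1 h2 h3 h4 h5 using h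
  have hsub : ∀ (x1 x2 x3 y1 y2 y3 : ℝ), Hs (max x1 y1) (max x2 y2) (max x3 y3) ⊆ Hs x1 x2 x3 ∧
      Hs (max x1 y1) (max x2 y2) (max x3 y3) ⊆ Hs y1 y2 y3 := by
    intro x1 x2 x3 y1 y2 y3
    constructor <;> rintro p ⟨q1, q2, q3⟩ <;> simp only [max_lt_iff] at q1 q2 q3 <;>
      exact ⟨by tauto, by tauto, by tauto⟩
  have hmem : ∀ (x1 x2 x3 y1 y2 y3 : ℝ) p, p ∈ Hs x1 x2 x3 → p ∈ Hs y1 y2 y3 →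
      p ∈ Hs (max x1 y1) (max x2 y2) (max x3 y3) := by
    rintro x1 x2 x3 y1 y2 y3 p ⟨q1, q2, q3⟩ ⟨r1, r2, r3⟩
    exact ⟨max_lt q1 r1, max_lt q2 r2, max_lt q3 r3⟩
  refine ⟨fun p => G p p / c p p, ?_, ?_⟩
  · intro p0 hp0
    have hO : (setAhat n)ᶜ ∩ Hs (a1 p0) (a2 p0) (b p0) ∈ nhds p0 :=
      ((Om_open n).inter (Hs_open _ _ _)).mem_nhds ⟨hSO hp0, h1 p0 hp0⟩
    have hc0 : ∀ᶠ p in nhds p0, c p0 p ≠ 0 :=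
      (h2 p0 hp0 p0 trivial).continuousAt.eventually_ne (h3 p0 hp0)
    have han : AnalyticAt ℂ (fun p => G p0 p / c p0 p) p0 :=
      (h4 p0 hp0 p0 ⟨hSO hp0, h1 p0 hp0⟩).div (h2 p0 hp0 p0 trivial) (h3 p0 hp0)
    refine han.congr ?_
    filter_upwards [hO, hc0, hSo.mem_nhds hp0] with p hpO hpc hpS
    rw [div_eq_div_iff hpc (h3 p hpS)]
    have e1 := hsub (a1 p0) (a2 p0) (b p0) (a1 p) (a2 p) (b p)
    refine uniq n (max (a1 p0) (a1 p)) (max (a2 p0) (a2 p)) (max (b p0) (b p)) (max (K p0) (K p))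
      (fun q => G p0 q * c p q) (fun q => G p q * c p0 q) ?_ ?_ ?_ p
      ⟨hSO hpS, hmem _ _ _ _ _ _ _ hpO.2 (h1 p hpS)⟩
    · intro q hq
      exact (h4 p0 hp0 q ⟨hq.1, e1.1 hq.2⟩).mul (h2 p hpS q trivial)
    · intro q hq
      exact (h4 p hpS q ⟨hq.1, e1.2 hq.2⟩).mul (h2 p0 hp0 q trivial)
    · intro q hq
      have e2 := hsub (K p0) (K p0) (K p0) (K p) (K p) (K p)
      rw [← h5 p0 hp0 q ⟨hq.1, e2.1 hq.2⟩, ← h5 p hpS q ⟨hq.1, e2.2 hq.2⟩]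
      ring
  · rintro p ⟨hpS, hp0⟩
    simp only
    rw [div_eq_iff (h3 p hpS), mul_comm]
    have e1 := hsub (a1 p) (a2 p) (b p) (-1) (-1) 0
    refine (uniq n (max (a1 p) (-1)) (max (a2 p) (-1)) (max (b p) 0) (K p)
      (fun q => c p q * I q) (G p) ?_ ?_ (h5 p hpS) p
      ⟨hSO hpS, hmem _ _ _ _ _ _ _ (h1 p hpS) hp0⟩).symm
    · intro q hq
      exact (h2 p hpS q trivial).mul (hI q (e1.2 hq.2))
    · intro q hq
      exact h4 p hpS q ⟨hq.1, e1.1 hq.2⟩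

end SelE
namespace SelE
open MvPolynomial SelA

/-- coefficient ring -/
abbrev RR := MvPolynomial (Fin 3) ℂ

/-- specialization -/
def ev (p : P3) : RR →+* ℂ := MvPolynomial.eval ![p.1, p.2.1, p.2.2]

lemma ev_an (c : RR) : AnalyticOnNhd ℂ (fun p => ev p c) Set.univ := by
  have h : (fun p : P3 => ev p c) = fun p => aeval (![p.1, p.2.1, p.2.2] : Fin 3 → ℂ) c := by
    funext p; simp [ev, MvPolynomial.aeval_eq_eval]
  rw [h]
  refine AnalyticOnNhd.aeval_mvPolynomial (fun i => ?_) c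
  intro p _
  fin_cases i
  · exact analyticAt_fst
  · exact (analyticAt_fst (p := p.2)).comp analyticAt_snd
  · exact (analyticAt_snd (p := p.2)).comp analyticAt_snd

/-- Properties of the integral that are used. -/
structure Good (n : ℕ) (I : MvPolynomial (Fin n) ℂ → P3 → ℂ) : Prop where
  an : ∀ f, AnalyticOnNhd ℂ (I f) (Hs (-1) (-1) 0)
  add : ∀ f g, ∀ p ∈ Hs (-1) (-1) 0, I (f + g) p = I f p + I g p
  smul : ∀ a f, ∀ p ∈ Hs (-1) (-1) 0, I (C a * f) p = a * I f p
  sha : ∀ f p, I f (p + (1, 0, 0)) = I ((∏ i, X i) * f) p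
  shb : ∀ f p, I f (p + (0, 1, 0)) = I ((∏ i, (1 - X i)) * f) p
  shc : ∀ f p, I f (p + (0, 0, 2)) = I (EE n ℂ ^ 2 * f) p
  swp : ∀ i j f, ∀ p ∈ Hs (-1) (-1) 0, I (sw i j f) p = I f p
  ibp : ∀ i f, ∀ p ∈ Hs 1 1 1, I (L (p.1 + 1) (p.2.1 + 1) p.2.2 i f) p = 0

variable {n : ℕ} {I : MvPolynomial (Fin n) ℂ → P3 → ℂ}

lemma Hs1_sub : Hs 1 1 1 ⊆ Hs (-1) (-1) 0 := by
  rintro p ⟨h1, h2, h3⟩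
  exact ⟨by linarith, by linarith, by linarith⟩

lemma Good.zero (hI : Good n I) {p : P3} (hp : p ∈ Hs (-1) (-1) 0) : I 0 p = 0 := by
  have := hI.smul 0 0 p hp
  simpa using this

lemma Good.sub (hI : Good n I) {p : P3} (hp : p ∈ Hs (-1) (-1) 0) (f g) :
    I (f - g) p = I f p - I g p := by
  have h : f - g = f + C (-1) * g := by simp; ring
  rw [h, hI.add _ _ _ hp, hI.smul _ _ _ hp]; ring

lemma Good.sum (hI : Good n I) {p : P3} (hp : p ∈ Hs (-1) (-1) 0) {ι : Type*} (s : Finset ι)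
    (f : ι → MvPolynomial (Fin n) ℂ) : I (∑ i ∈ s, f i) p = ∑ i ∈ s, I (f i) p := by
  classical
  induction s using Finset.induction_on with
  | empty => simpa using hI.zero hp
  | insert a s ha ih => rw [Finset.sum_insert ha, Finset.sum_insert ha, hI.add _ _ _ hp, ih]

lemma Good.expand (hI : Good n I) {q : P3} (hq : q ∈ Hs (-1) (-1) 0) (p : P3)
    (g : MvPolynomial (Fin n) RR) :
    I (map (ev p) g) q = ∑ m ∈ g.support, ev p (coeff m g) * I (monomial m 1) q := by
  conv_lhs => rw [g.as_sum]
  rw [map_sum, hI.sum hq]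
  refine Finset.sum_congr rfl fun m _ => ?_
  rw [map_monomial, ← hI.smul _ _ _ hq, C_mul_monomial, mul_one]

/-- relations -/
def NN (hI : Good n I) : Submodule RR (MvPolynomial (Fin n) RR) where
  carrier := {F | ∀ p ∈ Hs 1 1 1, I (map (ev p) F) p = 0}
  add_mem' := by
    intro a b ha hb p hp
    rw [map_add, hI.add _ _ _ (Hs1_sub hp), ha p hp, hb p hp, add_zero]
  zero_mem' := by
    intro p hp
    rw [map_zero, hI.zero (Hs1_sub hp)]
  smul_mem' := by
    intro c F hF p hp
    rw [← C_mul', map_mul, map_C, hI.smul _ _ _ (Hs1_sub hp), hF p hp, mul_zero]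

lemma mem_NN (hI : Good n I) {F} : F ∈ NN hI ↔ ∀ p ∈ Hs 1 1 1, I (map (ev p) F) p = 0 := Iff.rfl

lemma map_sw {K K' : Type*} [CommRing K] [IsDomain K] [CommRing K'] [IsDomain K'] (φ : K →+* K')
    (i j : Fin n) (f : MvPolynomial (Fin n) K) : map φ (sw i j f) = sw i j (map φ f) := by
  rw [sw, sw, map_rename]

lemma map_L {K K' : Type*} [CommRing K] [IsDomain K] [CommRing K'] [IsDomain K'] (φ : K →+* K')
    (a b γ : K) (i : Fin n) (f : MvPolynomial (Fin n) K) :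
    map φ (L a b γ i f) = L (φ a) (φ b) (φ γ) i (map φ f) := by
  simp only [L, map_add, map_mul, map_sub, map_one, map_X, map_C, map_sum, pderiv_map]
  congr 2
  refine Finset.sum_congr rfl fun j hj => ?_
  rw [D_map φ (Finset.ne_of_mem_erase hj).symm]
  simp

lemma ev0 (p : P3) : ev p (X 0) = p.1 := by simp [ev]
lemma ev1 (p : P3) : ev p (X 1) = p.2.1 := by simp [ev]
lemma ev2 (p : P3) : ev p (X 2) = p.2.2 := by simp [ev]

lemma NS (hI : Good n I) (i j f) : f - sw i j f ∈ NN hI := by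
  intro p hp
  have hp' := Hs1_sub hp
  rw [map_sub, map_sw, hI.sub hp', hI.swp _ _ _ _ hp', sub_self]

lemma NL (hI : Good n I) (i f) : L (X 0 + 1 : RR) (X 1 + 1) (X 2) i f ∈ NN hI := by
  intro p hp
  rw [map_L, map_add, map_add, map_one, ev0, ev1, ev2]
  exact hI.ibp i _ p hp

lemma N2 (hI : Good n I) (f) (h : f + f ∈ NN hI) : f ∈ NN hI := by
  intro p hp
  have := h p hp
  rw [map_add, hI.add _ _ _ (Hs1_sub hp)] at this
  linear_combination this / 2

lemma relA (hI : Good n I) (f : MvPolynomial (Fin n) ℂ) : ∃ g : MvPolynomial (Fin n) RR,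
    ∀ q ∈ Hs 1 1 1, ev q (∏ i : Fin n, (X 0 + 1 + X 2 * ((n - 1 - i.val : ℕ) : RR))) * I f q =
      I (map (ev q) g) (q + (1, 0, 0)) := by
  obtain ⟨g, hg⟩ := asteps (NN hI) (X 0 + 1) (X 1 + 1) (X 2) 1 (fun i => X i) (NS hI)
    (fun i f => by have := NL hI i f; rw [L] at this; simpa using this) (by simp)
    (fun i j l => by simp [sw]) (fun i j => by simp)
    (fun i j h => by rw [pderiv_X_of_ne h.symm]) (map C f)
  refine ⟨g, fun q hq => ?_⟩
  have hX : map (ev q) (∏ i : Fin n, (X i : MvPolynomial (Fin n) RR)) = ∏ i, X i := by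
    simp [map_prod]
  have := hg q hq
  rw [map_sub, hI.sub (Hs1_sub hq), map_mul, map_C, hI.smul _ _ _ (Hs1_sub hq), map_map, map_mul,
    hX, sub_eq_zero] at this
  have hid : (ev q).comp C = RingHom.id ℂ := by
    ext x; simp [ev]
  rw [hid, map_id] at this
  rw [hI.sha]
  exact this

lemma relB (hI : Good n I) (f : MvPolynomial (Fin n) ℂ) : ∃ g : MvPolynomial (Fin n) RR,
    ∀ q ∈ Hs 1 1 1, ev q (∏ i : Fin n, (X 1 + 1 + X 2 * ((n - 1 - i.val : ℕ) : RR))) * I f q =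
      I (map (ev q) g) (q + (0, 1, 0)) := by
  obtain ⟨g, hg⟩ := asteps (NN hI) (X 1 + 1) (X 0 + 1) (X 2) (-1) (fun i => 1 - X i) (NS hI)
    (fun i f => by
      have := NL hI i f; rw [L] at this
      have e : ∀ h : MvPolynomial (Fin n) RR, (1 - X i) * (1 - (1 - X i)) * h = X i * (1 - X i) * h := by
        intro h; ring
      simp only [e]
      convert this using 3
      simp only [map_neg, map_one]; ring) (by simp)
    (fun i j l => by simp [sw]) (fun i j => by simp)
    (fun i j h => by rw [map_sub, pderiv_X_of_ne h.symm]; simp) (map C f)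
  refine ⟨g, fun q hq => ?_⟩
  have hX : map (ev q) (∏ i : Fin n, (1 - X i : MvPolynomial (Fin n) RR)) = ∏ i, (1 - X i) := by
    simp [map_prod]
  have := hg q hq
  rw [map_sub, hI.sub (Hs1_sub hq), map_mul, map_C, hI.smul _ _ _ (Hs1_sub hq), map_map, map_mul,
    hX, sub_eq_zero] at this
  have hid : (ev q).comp C = RingHom.id ℂ := by
    ext x; simp [ev]
  rw [hid, map_id] at this
  rw [hI.shb]
  exact this

lemma ee_split2 {K : Type*} [CommRing K] : ee n K = (∏ i, X i) * ∏ i, (1 - X i) := by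
  rw [ee, Finset.prod_mul_distrib]

lemma Good.shee (hI : Good n I) (f : MvPolynomial (Fin n) ℂ) (p : P3) (M : ℕ) :
    I f (p + ((M : ℂ), (M : ℂ), 0)) = I (f * ee n ℂ ^ M) p := by
  induction M generalizing f with
  | zero =>
    have h : p + (((0 : ℕ) : ℂ), ((0 : ℕ) : ℂ), (0 : ℂ)) = p := by ext <;> simp
    rw [h]; simp
  | succ M ih =>
    have h : p + (((M + 1 : ℕ) : ℂ), ((M + 1 : ℕ) : ℂ), (0 : ℂ)) =
        p + ((M : ℂ), (M : ℂ), 0) + (1, 0, 0) + (0, 1, 0) := by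
      ext <;> simp <;> ring
    rw [h, hI.shb, hI.sha, ih]
    congr 1
    rw [pow_succ, ee_split2]; ring

lemma relC (hI : Good n I) : ∃ M : ℕ, ∀ p0 : P3,
    (∀ t : ℕ, 2 ≤ t → t ≤ n → ∀ v : ℕ, 1 ≤ v → (v : ℂ) + p0.2.2 * t ≠ 0) →
    ∃ c : RR, ev p0 c ≠ 0 ∧ ∀ f : MvPolynomial (Fin n) ℂ, ∃ g : MvPolynomial (Fin n) RR,
    ∀ q ∈ Hs 1 1 1, ev q c * I f (q + ((M : ℂ), (M : ℂ), 0)) =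
      I (map (ev q) g) (q + (0, 0, 2)) := by
  obtain ⟨M, hM⟩ := gamma_rel (NN hI) (X 0 + 1) (X 1 + 1) (X 2) (NS hI) (NL hI) (N2 hI)
  refine ⟨M, fun p0 hp0 => ?_⟩
  obtain ⟨c, hc, h⟩ := hM (ev p0) (by rw [ev2]; exact hp0)
  refine ⟨c, hc, fun f => ?_⟩
  obtain ⟨g, hg⟩ := h (map C f)
  refine ⟨g, fun q hq => ?_⟩
  have := hg q hq
  have hee : map (ev q) (ee n RR) = ee n ℂ := by simp [ee, map_prod]
  rw [map_sub, hI.sub (Hs1_sub hq), map_mul, map_C, hI.smul _ _ _ (Hs1_sub hq), map_mul, map_map,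
    map_mul, map_pow, map_pow, EE_map, hee, sub_eq_zero] at this
  have hid : (ev q).comp C = RingHom.id ℂ := by
    ext x; simp [ev]
  rw [hid, map_id] at this
  rw [hI.shee, hI.shc, this, mul_comm]

lemma Om_shift (p : P3) (k1 k2 k3 : ℤ) (hp : p ∈ (setAhat n)ᶜ) :
    p + ((k1 : ℂ), (k2 : ℂ), (k3 : ℂ)) ∈ (setAhat n)ᶜ := by
  intro h
  apply hp
  rcases h with ⟨j, h1, h2, ⟨m, hm⟩ | ⟨m, hm⟩⟩ | ⟨j, h1, h2, m, hm⟩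
  · left; refine ⟨j, h1, h2, Or.inl ⟨m - k1 - (j - 1) * k3, ?_⟩⟩
    simp only [Prod.fst_add, Prod.snd_add] at hm
    push_cast; linear_combination hm
  · left; refine ⟨j, h1, h2, Or.inr ⟨m - k2 - (j - 1) * k3, ?_⟩⟩
    simp only [Prod.fst_add, Prod.snd_add] at hm
    push_cast; linear_combination hm
  · right; refine ⟨j, h1, h2, m - (j + 1) * k3, ?_⟩
    simp only [Prod.snd_add] at hm
    push_cast; linear_combination hm

/-- continuation to a half-space -/
def Cont (n : ℕ) (I : MvPolynomial (Fin n) ℂ → P3 → ℂ) (a1 a2 b : ℝ) : Prop :=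
  ∀ f, ∃ F : P3 → ℂ, AnalyticOnNhd ℂ F ((setAhat n)ᶜ ∩ Hs a1 a2 b) ∧
    ∀ p ∈ ((setAhat n)ᶜ ∩ Hs a1 a2 b) ∩ Hs (-1) (-1) 0, F p = I f p

lemma stepG (hI : Good n I) (f : MvPolynomial (Fin n) ℂ) (M k1 k2 k3 : ℕ) (a1 a2 b : ℝ)
    (hC : Cont n I (a1 - M + k1) (a2 - M + k2) (b + k3)) (p0 : P3) (hp0 : p0 ∈ Hs a1 a2 b)
    (c : RR) (g : MvPolynomial (Fin n) RR)
    (hc : ev (p0 + (((-M : ℤ) : ℂ), ((-M : ℤ) : ℂ), ((0 : ℤ) : ℂ))) c ≠ 0)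
    (hrel : ∀ q ∈ Hs 1 1 1, ev q c * I f (q + ((M : ℂ), (M : ℂ), 0)) =
      I (map (ev q) g) (q + ((k1 : ℂ), (k2 : ℂ), (k3 : ℂ)))) :
    ∃ (a1 a2 b K : ℝ) (c G : P3 → ℂ), p0 ∈ Hs a1 a2 b ∧
      AnalyticOnNhd ℂ c Set.univ ∧ c p0 ≠ 0 ∧ AnalyticOnNhd ℂ G ((setAhat n)ᶜ ∩ Hs a1 a2 b) ∧
      ∀ p ∈ (setAhat n)ᶜ ∩ Hs K K K, c p * I f p = G p := by
  choose F hF1 hF2 using hC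
  set s : P3 := (((-M : ℤ) : ℂ), ((-M : ℤ) : ℂ), ((0 : ℤ) : ℂ)) with hs
  set t : P3 := (((k1 : ℤ) : ℂ), ((k2 : ℤ) : ℂ), ((k3 : ℤ) : ℂ)) with ht
  have hev : ∀ r : RR, AnalyticOnNhd ℂ (fun p => ev (p + s) r) Set.univ := by
    intro r p _
    exact (ev_an r (p + s) trivial).comp (f := fun p => p + s) (by fun_prop)
  have hmem : ∀ p ∈ (setAhat n)ᶜ ∩ Hs a1 a2 b,
      p + s + t ∈ (setAhat n)ᶜ ∩ Hs (a1 - M + k1) (a2 - M + k2) (b + k3) := by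
    rintro p ⟨hp, h1, h2, h3⟩
    refine ⟨Om_shift _ _ _ _ (Om_shift _ _ _ _ hp), ?_, ?_, ?_⟩ <;> simp [hs, ht] <;> linarith
  refine ⟨a1, a2, b, max (M + 1) (max (max a1 a2) b), fun p => ev (p + s) c,
    fun p => ∑ m ∈ g.support, ev (p + s) (coeff m g) * F (monomial m 1) (p + s + t), hp0, hev c, hc,
    ?_, ?_⟩
  · intro p hp
    refine Finset.analyticAt_fun_sum _ fun m _ => ?_
    exact (hev _ p trivial).mul ((hF1 (monomial m 1) (p + s + t) (hmem p hp)).comp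
      (f := fun p => p + s + t) (by fun_prop))
  · rintro p ⟨hp, h1, h2, h3⟩
    simp only [max_lt_iff] at h1 h2 h3
    have hM : (0 : ℝ) ≤ M := Nat.cast_nonneg _
    have hk1 : (0 : ℝ) ≤ k1 := Nat.cast_nonneg _
    have hk2 : (0 : ℝ) ≤ k2 := Nat.cast_nonneg _
    have hk3 : (0 : ℝ) ≤ k3 := Nat.cast_nonneg _
    have hq : p + s ∈ Hs 1 1 1 := by
      refine ⟨?_, ?_, ?_⟩ <;> simp [hs] <;> linarith
    have hr := hrel _ hq
    have e1 : p + s + ((M : ℂ), (M : ℂ), 0) = p := by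
      ext <;> simp [hs]
    have e2 : ((k1 : ℂ), (k2 : ℂ), (k3 : ℂ)) = t := by simp [ht]
    have h0 : p + s + t ∈ Hs (-1) (-1) 0 := by
      refine ⟨?_, ?_, ?_⟩ <;> simp [hs, ht] <;> linarith
    rw [e1, e2, hI.expand h0] at hr
    rw [hr]
    refine Finset.sum_congr rfl fun m _ => ?_
    rw [hF2 _ _ ⟨hmem p ⟨hp, h1.2.1.1, h2.2.1.2, h3.2.2⟩, h0⟩]

lemma neA (p : P3) (hp : p ∈ (setAhat n)ᶜ) :
    ev p (∏ i : Fin n, (X 0 + 1 + X 2 * ((n - 1 - i.val : ℕ) : RR))) ≠ 0 := by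
  rw [map_prod, Finset.prod_ne_zero_iff]
  intro i _ h
  apply hp
  left
  refine ⟨n - i.val, by omega, by omega, Or.inl ⟨-1, ?_⟩⟩
  rw [map_add, map_add, map_mul, map_natCast, ev0, ev2, map_one] at h
  have : ((n - i.val : ℕ) : ℂ) = ((n - 1 - i.val : ℕ) : ℂ) + 1 := by
    rw [← Nat.cast_succ]; congr 1; omega
  rw [this]; push_cast; linear_combination h

lemma neB (p : P3) (hp : p ∈ (setAhat n)ᶜ) :
    ev p (∏ i : Fin n, (X 1 + 1 + X 2 * ((n - 1 - i.val : ℕ) : RR))) ≠ 0 := by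
  rw [map_prod, Finset.prod_ne_zero_iff]
  intro i _ h
  apply hp
  left
  refine ⟨n - i.val, by omega, by omega, Or.inr ⟨-1, ?_⟩⟩
  rw [map_add, map_add, map_mul, map_natCast, ev1, ev2, map_one] at h
  have : ((n - i.val : ℕ) : ℂ) = ((n - 1 - i.val : ℕ) : ℂ) + 1 := by
    rw [← Nat.cast_succ]; congr 1; omega
  rw [this]; push_cast; linear_combination h

lemma neC (p : P3) (hp : p ∈ (setAhat n)ᶜ) (t : ℕ) (h2 : 2 ≤ t) (ht : t ≤ n) (v : ℕ) :
    (v : ℂ) + p.2.2 * t ≠ 0 := by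
  intro h
  apply hp
  right
  refine ⟨t - 1, by omega, by omega, -v, ?_⟩
  have : ((t - 1 : ℕ) : ℂ) + 1 = t := by
    rw [← Nat.cast_succ]; congr 1; omega
  rw [this]; push_cast; linear_combination h

lemma S_open (n : ℕ) (a1 a2 b : ℝ) : IsOpen ((setAhat n)ᶜ ∩ Hs a1 a2 b) :=
  (Om_open n).inter (Hs_open _ _ _)

lemma contA (hI : Good n I) (a1 a2 b : ℝ) (h : Cont n I a1 a2 b) : Cont n I (a1 - 1) a2 b := by
  intro f
  refine glue n (I f) (hI.an f) _ (S_open _ _ _ _) Set.inter_subset_left ?_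
  intro p0 hp0
  obtain ⟨g, hg⟩ := relA hI f
  refine stepG hI f 0 1 0 0 (a1 - 1) a2 b (by simpa using h) p0 hp0.2
    (∏ i : Fin n, (X 0 + 1 + X 2 * ((n - 1 - i.val : ℕ) : RR))) g ?_ ?_
  · have := neA p0 hp0.1
    convert this using 3
    simp
  · intro q hq
    have := hg q hq
    convert this using 3 <;> simp

lemma contB (hI : Good n I) (a1 a2 b : ℝ) (h : Cont n I a1 a2 b) : Cont n I a1 (a2 - 1) b := by
  intro f
  refine glue n (I f) (hI.an f) _ (S_open _ _ _ _) Set.inter_subset_left ?_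
  intro p0 hp0
  obtain ⟨g, hg⟩ := relB hI f
  refine stepG hI f 0 0 1 0 a1 (a2 - 1) b (by simpa using h) p0 hp0.2
    (∏ i : Fin n, (X 1 + 1 + X 2 * ((n - 1 - i.val : ℕ) : RR))) g ?_ ?_
  · have := neB p0 hp0.1
    convert this using 3
    simp
  · intro q hq
    have := hg q hq
    convert this using 3 <;> simp

lemma contC (hI : Good n I) (b : ℝ) (h : ∀ a1 a2, Cont n I a1 a2 b) (a1 a2 : ℝ) :
    Cont n I a1 a2 (b - 2) := by
  intro f
  refine glue n (I f) (hI.an f) _ (S_open _ _ _ _) Set.inter_subset_left ?_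
  intro p0 hp0
  obtain ⟨M, hM⟩ := relC hI
  obtain ⟨c, hc, hc'⟩ := hM (p0 + (((-M : ℤ) : ℂ), ((-M : ℤ) : ℂ), ((0 : ℤ) : ℂ)))
    (fun t h2 ht v _ => neC _ (Om_shift _ _ _ _ hp0.1) t h2 ht v)
  obtain ⟨g, hg⟩ := hc' f
  refine stepG hI f M 0 0 2 a1 a2 (b - 2) (by simpa using h _ _) p0 hp0.2 c g hc ?_
  intro q hq
  have := hg q hq
  convert this using 3; simp

lemma cont0 (hI : Good n I) : Cont n I (-1) (-1) 0 := fun f =>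
  ⟨I f, fun p hp => hI.an f p hp.2, fun _ _ => rfl⟩

lemma Cont.mono {a1 a2 b a1' a2' b' : ℝ} (h : Cont n I a1 a2 b) (h1 : a1 ≤ a1') (h2 : a2 ≤ a2')
    (h3 : b ≤ b') : Cont n I a1' a2' b' := by
  intro f
  obtain ⟨F, hF, hF'⟩ := h f
  have hs : Hs a1' a2' b' ⊆ Hs a1 a2 b := by
    rintro p ⟨q1, q2, q3⟩
    exact ⟨by linarith, by linarith, by linarith⟩
  exact ⟨F, fun p hp => hF p ⟨hp.1, hs hp.2⟩, fun p hp => hF' p ⟨⟨hp.1.1, hs hp.1.2⟩, hp.2⟩⟩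

lemma contAll (hI : Good n I) (k : ℕ) : ∀ a1 a2, Cont n I a1 a2 (-(2 * k : ℝ)) := by
  induction k with
  | zero =>
    have h1 : ∀ l : ℕ, Cont n I (-1 - l) (-1) 0 := by
      intro l
      induction l with
      | zero => simpa using cont0 hI
      | succ l ih => convert contA hI _ _ _ ih using 1; push_cast; ring
    have h2 : ∀ l m : ℕ, Cont n I (-1 - l) (-1 - m) 0 := by
      intro l m
      induction m with
      | zero => simpa using h1 l
      | succ m ih => convert contB hI _ _ _ ih using 1; push_cast; ring
    intro a1 a2
    obtain ⟨l, hl⟩ := exists_nat_ge (-1 - a1)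
    obtain ⟨m, hm⟩ := exists_nat_ge (-1 - a2)
    exact (h2 l m).mono (by linarith) (by linarith) (by simp)
  | succ k ih =>
    intro a1 a2
    convert contC hI _ ih a1 a2 using 1
    push_cast; ring

theorem continuation (hI : Good n I) (f : MvPolynomial (Fin n) ℂ) :
    ∃ F : P3 → ℂ, AnalyticOnNhd ℂ F (setAhat n)ᶜ ∧
      ∀ p ∈ (setAhat n)ᶜ ∩ Hs (-1) (-1) 0, F p = I f p := by
  refine glue n (I f) (hI.an f) _ (Om_open n) subset_rfl ?_
  intro p0 hp0
  obtain ⟨k, hk⟩ := exists_nat_gt (-p0.2.2.re)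
  obtain ⟨F, hF, hF'⟩ := contAll hI k (p0.1.re - 1) (p0.2.1.re - 1) f
  refine ⟨p0.1.re - 1, p0.2.1.re - 1, -(2 * k : ℝ),
    max 0 (max (p0.1.re - 1) (p0.2.1.re - 1)), fun _ => 1, F, ?_, analyticOnNhd_const,
    one_ne_zero, hF, ?_⟩
  · have : (0 : ℝ) ≤ k := Nat.cast_nonneg _
    refine ⟨?_, ?_, ?_⟩ <;> linarith
  · rintro p ⟨hp, h1, h2, h3⟩
    simp only [max_lt_iff] at h1 h2 h3
    have : (0 : ℝ) ≤ k := Nat.cast_nonneg _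
    rw [one_mul, hF' p ⟨⟨hp, h1.2.1, h2.2.2, by linarith⟩, by linarith, by linarith, h3.1⟩]

end SelE
namespace SelE

section
variable {Y : Type*} [MeasurableSpace Y] (μ : Measure Y)

/-- linear functional -/
def ell (a b c : ℝ) : P3 →L[ℂ] ℂ :=
  (a : ℂ) • ContinuousLinearMap.fst ℂ ℂ (ℂ × ℂ) +
  (b : ℂ) • (ContinuousLinearMap.fst ℂ ℂ ℂ).comp (ContinuousLinearMap.snd ℂ ℂ (ℂ × ℂ)) +
  (c : ℂ) • (ContinuousLinearMap.snd ℂ ℂ ℂ).comp (ContinuousLinearMap.snd ℂ ℂ (ℂ × ℂ))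

lemma ell_apply (a b c : ℝ) (p : P3) : ell a b c p = p.1 * a + p.2.1 * b + p.2.2 * c := by
  simp [ell]; ring

lemma ell_norm (a b c : ℝ) : ‖ell a b c‖ ≤ |a| + |b| + |c| := by
  refine ContinuousLinearMap.opNorm_le_bound _ (by positivity) fun p => ?_
  rw [ell_apply]
  have h1 : ‖p.1‖ ≤ ‖p‖ := norm_fst_le p
  have h2 : ‖p.2.1‖ ≤ ‖p‖ := (norm_fst_le p.2).trans (norm_snd_le p)
  have h3 : ‖p.2.2‖ ≤ ‖p‖ := (norm_snd_le p.2).trans (norm_snd_le p)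
  calc ‖p.1 * a + p.2.1 * b + p.2.2 * c‖ ≤ ‖p.1 * a‖ + ‖p.2.1 * b‖ + ‖p.2.2 * c‖ := norm_add₃_le
    _ = ‖p.1‖ * |a| + ‖p.2.1‖ * |b| + ‖p.2.2‖ * |c| := by simp
    _ ≤ ‖p‖ * |a| + ‖p‖ * |b| + ‖p‖ * |c| := by gcongr
    _ = _ := by ring

lemma ell_cont : Continuous (fun z : ℝ × ℝ × ℝ => ell z.1 z.2.1 z.2.2) := by
  unfold ell
  refine Continuous.add (Continuous.add ?_ ?_) ?_
  · exact (Complex.continuous_ofReal.comp continuous_fst).smul continuous_const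
  · exact (Complex.continuous_ofReal.comp (continuous_fst.comp continuous_snd)).smul continuous_const
  · exact (Complex.continuous_ofReal.comp (continuous_snd.comp continuous_snd)).smul continuous_const

lemma ell_meas (A B Cc : Y → ℝ) (hA : Measurable A) (hB : Measurable B)
    (hC : Measurable Cc) : AEStronglyMeasurable (fun x => ell (A x) (B x) (Cc x)) μ := by
  have hz : AEStronglyMeasurable (fun x => ((A x, B x, Cc x) : ℝ × ℝ × ℝ)) μ :=
      (hA.prodMk (hB.prodMk hC)).aestronglyMeasurable
  exact Continuous.comp_aestronglyMeasurable (g := fun z : ℝ × ℝ × ℝ => ell z.1 z.2.1 z.2.2) (f := fun x => ((A x, B x, Cc x) : ℝ × ℝ × ℝ)) ell_cont hz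

/-- power as multilinear map -/
def Mk (k : ℕ) (l : P3 →L[ℂ] ℂ) : ContinuousMultilinearMap ℂ (fun _ : Fin k => P3) ℂ :=
  (ContinuousMultilinearMap.mkPiAlgebraFin ℂ k ℂ).compContinuousLinearMap (fun _ => l)

lemma Mk_apply (k : ℕ) (l : P3 →L[ℂ] ℂ) (h : P3) : Mk k l (fun _ => h) = (l h) ^ k := by
  simp [Mk, ContinuousMultilinearMap.mkPiAlgebraFin_apply]

lemma Mk_norm (k : ℕ) (l : P3 →L[ℂ] ℂ) : ‖Mk k l‖ ≤ ‖l‖ ^ k := by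
  refine (ContinuousMultilinearMap.norm_compContinuousLinearMap_le _ _).trans ?_
  simp

lemma Mk_cont (k : ℕ) : Continuous (Mk k) := by
  have h1 := (ContinuousMultilinearMap.compContinuousLinearMapContinuousMultilinear ℂ
    (fun _ : Fin k => P3) (fun _ => ℂ) ℂ).cont.comp
      (continuous_pi fun _ : Fin k => (continuous_id (X := P3 →L[ℂ] ℂ)))
  exact h1.clm_apply (continuous_const (y := ContinuousMultilinearMap.mkPiAlgebraFin ℂ k ℂ))

theorem analytic_param (A B Cc : Y → ℝ) (φ : Y → ℂ) (hA : Measurable A) (hB : Measurable B)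
    (hC : Measurable Cc) (hφ : AEStronglyMeasurable φ μ)
    (hA0 : ∀ᵐ x ∂μ, A x ≤ 0) (hB0 : ∀ᵐ x ∂μ, B x ≤ 0) (hC0 : ∀ᵐ x ∂μ, Cc x ≤ 0)
    (hint : ∀ a b c : ℝ, -1 < a → -1 < b → 0 < c →
      Integrable (fun x => ‖φ x‖ * Real.exp (a * A x + b * B x + c * Cc x)) μ) :
    AnalyticOnNhd ℂ (fun p : P3 => ∫ x, φ x * cexp (p.1 * A x + p.2.1 * B x + p.2.2 * Cc x) ∂μ)
      (Hs (-1) (-1) 0) := by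
  rintro p ⟨h1, h2, h3⟩
  obtain ⟨r, hr0, hr1, hr2, hr3⟩ : ∃ r : ℝ, 0 < r ∧ -1 < p.1.re - r ∧ -1 < p.2.1.re - r ∧
      0 < p.2.2.re - r := by
    refine ⟨min (p.1.re + 1) (min (p.2.1.re + 1) p.2.2.re) / 2, ?_, ?_, ?_, ?_⟩
    · have : 0 < min (p.1.re + 1) (min (p.2.1.re + 1) p.2.2.re) := by
        simp only [lt_min_iff]; refine ⟨?_, ?_, ?_⟩ <;> linarith
      linarith
    · have := min_le_left (p.1.re + 1) (min (p.2.1.re + 1) p.2.2.re); linarith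
    · have := (min_le_right (p.1.re + 1) (min (p.2.1.re + 1) p.2.2.re)).trans (min_le_left _ _); linarith
    · have := (min_le_right (p.1.re + 1) (min (p.2.1.re + 1) p.2.2.re)).trans (min_le_right _ _); linarith
  have hg := hint _ _ _ hr1 hr2 hr3
  set g : Y → ℝ := fun x => ‖φ x‖ * Real.exp ((p.1.re - r) * A x + (p.2.1.re - r) * B x +
    (p.2.2.re - r) * Cc x) with hgdef
  let l : Y → (P3 →L[ℂ] ℂ) := fun x => ell (A x) (B x) (Cc x)
  let w : Y → ℂ := fun x => φ x * cexp (p.1 * A x + p.2.1 * B x + p.2.2 * Cc x)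
  have hl : AEStronglyMeasurable l μ := by
    exact ell_meas μ A B Cc hA hB hC
  have hw : AEStronglyMeasurable w μ := by
    refine hφ.mul (Measurable.aestronglyMeasurable ?_)
    fun_prop
  have hwn : ∀ x, ‖w x‖ = ‖φ x‖ * Real.exp (p.1.re * A x + p.2.1.re * B x + p.2.2.re * Cc x) := by
    intro x
    simp only [w, norm_mul, Complex.norm_exp]
    simp
  have hwl : ∀ᵐ x ∂μ, ∀ s, s ≤ r → ‖w x‖ * Real.exp (‖l x‖ * s) ≤ g x := by
    filter_upwards [hA0, hB0, hC0] with x ha hb hc s hs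
    have h4 : ‖l x‖ ≤ -(A x + B x + Cc x) := by
      refine (ell_norm _ _ _).trans ?_
      rw [abs_of_nonpos ha, abs_of_nonpos hb, abs_of_nonpos hc]; linarith
    rw [hwn, mul_assoc, ← Real.exp_add, hgdef]
    have h5 : ‖l x‖ * s ≤ -(A x + B x + Cc x) * r :=
      (mul_le_mul_of_nonneg_left hs (norm_nonneg _)).trans (mul_le_mul_of_nonneg_right h4 hr0.le)
    refine mul_le_mul_of_nonneg_left (Real.exp_le_exp.2 ?_) (norm_nonneg _)
    linarith
  have hterm : ∀ᵐ x ∂μ, ∀ k : ℕ, ‖w x‖ * ‖((k.factorial : ℂ)⁻¹ • Mk k (l x))‖ * r ^ k ≤ g x := by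
    filter_upwards [hwl] with x hx k
    refine le_trans ?_ (hx r le_rfl)
    rw [mul_assoc]
    refine mul_le_mul_of_nonneg_left ?_ (norm_nonneg _)
    rw [norm_smul, norm_inv, Complex.norm_natCast]
    refine le_trans ?_ (Real.pow_div_factorial_le_exp (‖l x‖ * r) (by positivity) k)
    rw [div_eq_inv_mul, mul_assoc, mul_pow]
    gcongr
    exact Mk_norm _ _
  have hmeas : ∀ k : ℕ, AEStronglyMeasurable (fun x => w x • ((k.factorial : ℂ)⁻¹ • Mk k (l x))) μ :=
    fun k => hw.smul (((Mk_cont k).const_smul ((k.factorial : ℂ)⁻¹)).comp_aestronglyMeasurable hl)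
  have hintk : ∀ k : ℕ, Integrable (fun x => w x • ((k.factorial : ℂ)⁻¹ • Mk k (l x))) μ := by
    intro k
    refine Integrable.mono' (hg.const_mul ((r ^ k)⁻¹)) (hmeas k) ?_
    filter_upwards [hterm] with x hx
    rw [norm_smul, ← div_eq_inv_mul, le_div_iff₀ (by positivity)]
    exact hx k
  let q : FormalMultilinearSeries ℂ P3 ℂ := fun k => ∫ x, w x • ((k.factorial : ℂ)⁻¹ • Mk k (l x)) ∂μ
  refine ⟨q, ENNReal.ofReal r, ?_, by simpa using hr0, ?_⟩
  · have hR : ENNReal.ofReal r = ((r.toNNReal : NNReal) : ENNReal) := rfl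
    rw [hR]
    refine q.le_radius_of_bound (∫ x, g x ∂μ) fun k => ?_
    rw [Real.coe_toNNReal r hr0.le]
    calc ‖q k‖ * r ^ k ≤ (∫ x, ‖w x • ((k.factorial : ℂ)⁻¹ • Mk k (l x))‖ ∂μ) * r ^ k := by
          gcongr; exact norm_integral_le_integral_norm _
      _ = ∫ x, ‖w x • ((k.factorial : ℂ)⁻¹ • Mk k (l x))‖ * r ^ k ∂μ := by
          rw [integral_mul_const]
      _ ≤ ∫ x, g x ∂μ := by
          refine integral_mono_ae ((hintk k).norm.mul_const _) hg ?_
          filter_upwards [hterm] with x hx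
          rw [norm_smul]; exact hx k
  · intro h hh
    have hh' : ‖h‖ < r := by
      rw [Metric.mem_eball, edist_zero_right] at hh
      rw [← ofReal_norm] at hh
      exact (ENNReal.ofReal_lt_ofReal_iff hr0).1 hh
    have hq : ∀ k, q k (fun _ => h) = ∫ x, w x * ((k.factorial : ℂ)⁻¹ * (l x h) ^ k) ∂μ := by
      intro k
      have := ContinuousLinearMap.integral_comp_comm
        (ContinuousMultilinearMap.apply ℂ (fun _ : Fin k => P3) ℂ (fun _ => h)) (hintk k)
      simp only [ContinuousMultilinearMap.apply_apply, smul_apply,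
        Mk_apply, smul_eq_mul] at this
      rw [this]
    simp only [hq]
    refine hasSum_integral_of_dominated_convergence
      (fun k x => ‖w x‖ * ((‖l x‖ * ‖h‖) ^ k / k.factorial)) ?_ ?_ ?_ ?_ ?_
    · intro k
      refine hw.mul (AEStronglyMeasurable.const_mul (AEStronglyMeasurable.pow ?_ _) _)
      exact hl.apply_continuousLinearMap h
    · intro k
      refine Filter.Eventually.of_forall fun x => ?_
      rw [norm_mul (w x)]
      refine mul_le_mul_of_nonneg_left ?_ (norm_nonneg _)
      rw [norm_mul, norm_inv, Complex.norm_natCast, norm_pow, div_eq_inv_mul]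
      gcongr
      exact (l x).le_opNorm h
    · refine Filter.Eventually.of_forall fun x => ?_
      exact (Real.summable_pow_div_factorial _).mul_left _
    · have e : ∀ x, ∑' k : ℕ, ‖w x‖ * ((‖l x‖ * ‖h‖) ^ k / k.factorial) =
          ‖w x‖ * Real.exp (‖l x‖ * ‖h‖) := by
        intro x
        rw [tsum_mul_left, Real.exp_eq_exp_ℝ, NormedSpace.exp_eq_tsum_div]
      simp only [e]
      refine Integrable.mono' hg ?_ ?_
      · refine hw.norm.mul ?_
        exact Real.continuous_exp.comp_aestronglyMeasurable (hl.norm.mul_const _)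
      · filter_upwards [hwl] with x hx
        rw [Real.norm_of_nonneg (by positivity)]
        exact hx _ hh'.le
    · refine Filter.Eventually.of_forall fun x => ?_
      have e : φ x * cexp ((p + h).1 * A x + (p + h).2.1 * B x + (p + h).2.2 * Cc x) =
          w x * cexp (l x h) := by
        simp only [w, l, ell_apply, mul_assoc, ← Complex.exp_add]
        congr 2
        simp only [Prod.fst_add, Prod.snd_add]; ring
      rw [e]
      refine HasSum.mul_left _ ?_
      have := NormedSpace.exp_series_hasSum_exp' (𝕂 := ℂ) (l x h)
      rw [← Complex.exp_eq_exp_ℂ] at this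
      simpa using this

end
end SelE
namespace SelE
open MvPolynomial SelA

/-- one-sided power -/
def pw (s : ℂ) (t : ℝ) : ℂ := if 0 < t then (t : ℂ) ^ s else 0

lemma pw_pos (s : ℂ) {t : ℝ} (h : 0 < t) : pw s t = cexp (s * (Real.log t : ℝ)) := by
  rw [pw, if_pos h, Complex.cpow_def_of_ne_zero (by exact_mod_cast h.ne'), Complex.ofReal_log h.le,
    mul_comm]

lemma pw_npos (s : ℂ) {t : ℝ} (h : t ≤ 0) : pw s t = 0 := by
  rw [pw, if_neg (not_lt.2 h)]

lemma pw_add_one (s : ℂ) (t : ℝ) : pw (s + 1) t = t * pw s t := by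
  by_cases h : 0 < t
  · rw [pw, pw, if_pos h, if_pos h, Complex.cpow_add _ _ (by exact_mod_cast h.ne'), Complex.cpow_one,
      mul_comm]
  · rw [pw_npos _ (not_lt.1 h), pw_npos _ (not_lt.1 h), mul_zero]

variable {n : ℕ}

/-- weight -/
def W (p : P3) (y : Fin n → ℝ) : ℂ :=
  (∏ i, (pw p.1 (y i) * pw p.2.1 (1 - y i))) *
    ∏ q ∈ (Finset.univ : Finset (Fin n)).offDiag, pw p.2.2 |y q.1 - y q.2|

/-- evaluation -/
def evy (y : Fin n → ℝ) (f : MvPolynomial (Fin n) ℂ) : ℂ := eval (fun i => (y i : ℂ)) f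

/-- the integral -/
def II (f : MvPolynomial (Fin n) ℂ) (p : P3) : ℂ := ∫ y, evy y f * W p y

/-- generic points of the cube -/
def U (n : ℕ) : Set (Fin n → ℝ) :=
  {y | (∀ i, 0 < y i ∧ y i < 1) ∧ ∀ i j : Fin n, i ≠ j → y i ≠ y j}

lemma U_meas : MeasurableSet (U n) := by
  have : U n = (⋂ i, {y : Fin n → ℝ | 0 < y i ∧ y i < 1}) ∩
      ⋂ i, ⋂ j, {y : Fin n → ℝ | i ≠ j → y i ≠ y j} := by
    ext y; simp [U]
  rw [this]
  refine MeasurableSet.inter (MeasurableSet.iInter fun i => ?_)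
    (MeasurableSet.iInter fun i => MeasurableSet.iInter fun j => ?_)
  · exact (measurableSet_lt measurable_const (measurable_pi_apply i)).inter
      (measurableSet_lt (measurable_pi_apply i) measurable_const)
  · by_cases h : i = j
    · simp [h]
    · simp only [ne_eq, h, not_false_eq_true, forall_true_left]
      exact (measurableSet_eq_fun (measurable_pi_apply i) (measurable_pi_apply j)).compl

/-- log sum -/
def LA (y : Fin n → ℝ) : ℝ := ∑ i, Real.log (y i)
/-- log sum -/
def LB (y : Fin n → ℝ) : ℝ := ∑ i, Real.log (1 - y i)
/-- log sum -/
def LC (y : Fin n → ℝ) : ℝ :=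
  ∑ q ∈ (Finset.univ : Finset (Fin n)).offDiag, Real.log |y q.1 - y q.2|

lemma LA_meas : Measurable (LA (n := n)) := by unfold LA; fun_prop
lemma LB_meas : Measurable (LB (n := n)) := by unfold LB; fun_prop
lemma LC_meas : Measurable (LC (n := n)) := by
  unfold LC
  refine Finset.measurable_fun_sum _ fun q _ => ?_
  refine Real.measurable_log.comp ?_
  refine continuous_abs.measurable.comp ?_
  exact (measurable_pi_apply _).sub (measurable_pi_apply _)

lemma LA_np {y : Fin n → ℝ} (hy : y ∈ U n) : LA y ≤ 0 :=
  Finset.sum_nonpos fun i _ => Real.log_nonpos (hy.1 i).1.le (hy.1 i).2.le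
lemma LB_np {y : Fin n → ℝ} (hy : y ∈ U n) : LB y ≤ 0 :=
  Finset.sum_nonpos fun i _ => Real.log_nonpos (by linarith [(hy.1 i).2]) (by linarith [(hy.1 i).1])
lemma log_np {y : Fin n → ℝ} (hy : y ∈ U n) (i j : Fin n) : Real.log |y i - y j| ≤ 0 := by
  refine Real.log_nonpos (abs_nonneg _) ?_
  rw [abs_le]
  have h1 := hy.1 i
  have h2 := hy.1 j
  constructor <;> linarith
lemma LC_np {y : Fin n → ℝ} (hy : y ∈ U n) : LC y ≤ 0 :=
  Finset.sum_nonpos fun q _ => log_np hy _ _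
lemma LC_le {y : Fin n → ℝ} (hy : y ∈ U n) {i j : Fin n} (h : i ≠ j) : LC y ≤ Real.log |y i - y j| := by
  unfold LC
  rw [← Finset.add_sum_erase _ _ (Finset.mem_offDiag.2 ⟨Finset.mem_univ i, Finset.mem_univ j, h⟩ :
    (i, j) ∈ (Finset.univ : Finset (Fin n)).offDiag)]
  have := Finset.sum_nonpos (s := (Finset.univ : Finset (Fin n)).offDiag.erase (i, j))
    (f := fun q => Real.log |y q.1 - y q.2|) fun q _ => log_np hy _ _
  simp only at this ⊢
  linarith

lemma W_off (p : P3) {y : Fin n → ℝ} (hy : y ∉ U n) : W p y = 0 := by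
  by_cases h : ∀ i, 0 < y i ∧ y i < 1
  · have : ∃ i j, i ≠ j ∧ y i = y j := by
      by_contra hc
      push Not at hc
      exact hy ⟨h, hc⟩
    obtain ⟨i, j, hij, h⟩ := this
    unfold W
    rw [Finset.prod_eq_zero (s := (Finset.univ : Finset (Fin n)).offDiag) (i := (i, j)), mul_zero]
    · exact Finset.mem_offDiag.2 ⟨Finset.mem_univ i, Finset.mem_univ j, hij⟩
    · exact pw_npos _ (by simp [h])
  · push Not at h
    obtain ⟨i, hi⟩ := h
    unfold W
    rw [Finset.prod_eq_zero (s := Finset.univ) (i := i) (Finset.mem_univ _), zero_mul]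
    by_cases h0 : 0 < y i
    · rw [pw_npos _ (by linarith [hi h0] : 1 - y i ≤ 0), mul_zero]
    · rw [pw_npos _ (not_lt.1 h0), zero_mul]

lemma W_on (p : P3) {y : Fin n → ℝ} (hy : y ∈ U n) :
    W p y = cexp (p.1 * LA y + p.2.1 * LB y + p.2.2 * LC y) := by
  unfold W LA LB LC
  push_cast
  rw [Complex.exp_add, Complex.exp_add, Finset.mul_sum, Finset.mul_sum, Finset.mul_sum,
    Complex.exp_sum, Complex.exp_sum, Complex.exp_sum, Finset.prod_mul_distrib]
  congr 1
  · congr 1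
    · exact Finset.prod_congr rfl fun i _ => pw_pos _ (hy.1 i).1
    · exact Finset.prod_congr rfl fun i _ => pw_pos _ (by linarith [(hy.1 i).2])
  · refine Finset.prod_congr rfl fun q hq => pw_pos _ ?_
    rw [abs_pos, sub_ne_zero]
    exact hy.2 _ _ (Finset.mem_offDiag.1 hq).2.2

lemma W_norm (p : P3) {y : Fin n → ℝ} (hy : y ∈ U n) :
    ‖W p y‖ = Real.exp (p.1.re * LA y + p.2.1.re * LB y + p.2.2.re * LC y) := by
  rw [W_on p hy, Complex.norm_exp]; simp

lemma beta_int (a b : ℝ) (ha : -1 < a) (hb : -1 < b) :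
    Integrable ((Set.Ioo (0 : ℝ) 1).indicator
      (fun t => Real.exp (a * Real.log t + b * Real.log (1 - t)))) := by
  rw [integrable_indicator_iff measurableSet_Ioo]
  have h := (Complex.betaIntegral_convergent (u := (a + 1 : ℝ)) (v := (b + 1 : ℝ))
    (by simp; linarith) (by simp; linarith))
  rw [intervalIntegrable_iff_integrableOn_Ioo_of_le zero_le_one] at h
  refine (h.norm).congr ?_
  filter_upwards [ae_restrict_mem measurableSet_Ioo] with t ht
  have h1 : 0 < 1 - t := by linarith [ht.2]
  rw [norm_mul, Real.exp_add]
  congr 1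
  · rw [Complex.norm_cpow_eq_rpow_re_of_pos ht.1, Real.rpow_def_of_pos ht.1]
    simp [mul_comm]
  · have : (1 - (t : ℂ)) = ((1 - t : ℝ) : ℂ) := by push_cast; rfl
    rw [this, Complex.norm_cpow_eq_rpow_re_of_pos h1, Real.rpow_def_of_pos h1]
    simp [mul_comm]

lemma exp_int (a b c : ℝ) (ha : -1 < a) (hb : -1 < b) (hc : 0 < c) :
    IntegrableOn (fun y : Fin n → ℝ => Real.exp (a * LA y + b * LB y + c * LC y)) (U n) := by
  have h := Integrable.fintype_prod (ι := Fin n) (μ := fun _ => (volume : Measure ℝ))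
    (f := fun _ => (Set.Ioo (0 : ℝ) 1).indicator
      (fun t => Real.exp (a * Real.log t + b * Real.log (1 - t)))) (fun _ => beta_int a b ha hb)
  refine Integrable.mono' (h.integrableOn (s := U n)) ?_ ?_
  · have h1 := LA_meas (n := n)
    have h2 := LB_meas (n := n)
    have h3 := LC_meas (n := n)
    exact Measurable.aestronglyMeasurable (by fun_prop)
  · filter_upwards [ae_restrict_mem U_meas] with y hy
    rw [Real.norm_of_nonneg (Real.exp_pos _).le]
    have : ∀ i ∈ Finset.univ, (Set.Ioo (0 : ℝ) 1).indicator
      (fun t => Real.exp (a * Real.log t + b * Real.log (1 - t))) (y i) =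
        Real.exp (a * Real.log (y i) + b * Real.log (1 - y i)) := fun i _ =>
      Set.indicator_of_mem (show y i ∈ Set.Ioo (0:ℝ) 1 from hy.1 i) _
    rw [Finset.prod_congr rfl this, ← Real.exp_sum, Finset.sum_add_distrib, ← Finset.mul_sum,
      ← Finset.mul_sum]
    refine Real.exp_le_exp.2 ?_
    have := mul_nonneg_of_nonpos_of_nonpos (LC_np hy) (neg_nonpos.2 hc.le)
    unfold LA LB
    linarith

lemma evy_bd (f : MvPolynomial (Fin n) ℂ) : ∃ B : ℝ, ∀ y ∈ U n, ‖evy y f‖ ≤ B := by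
  refine ⟨∑ m ∈ f.support, ‖coeff m f‖, fun y hy => ?_⟩
  rw [evy, eval_eq]
  refine (norm_sum_le _ _).trans (Finset.sum_le_sum fun m _ => ?_)
  rw [norm_mul, norm_prod]
  refine mul_le_of_le_one_right (norm_nonneg _) (Finset.prod_le_one (fun _ _ => norm_nonneg _) ?_)
  intro i _
  rw [norm_pow, Complex.norm_real, Real.norm_of_nonneg (hy.1 i).1.le]
  exact pow_le_one₀ (hy.1 i).1.le (hy.1 i).2.le

lemma evy_cont (f : MvPolynomial (Fin n) ℂ) : Continuous (fun y : Fin n → ℝ => evy y f) := by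
  have : Continuous (fun x : Fin n → ℂ => eval x f) := MvPolynomial.continuous_eval f
  exact this.comp (by fun_prop)

lemma evexp_int (f : MvPolynomial (Fin n) ℂ) (a b c : ℝ) (ha : -1 < a) (hb : -1 < b) (hc : 0 < c) :
    IntegrableOn (fun y : Fin n → ℝ => ‖evy y f‖ * Real.exp (a * LA y + b * LB y + c * LC y)) (U n) := by
  obtain ⟨B, hB⟩ := evy_bd f
  refine Integrable.mono' ((exp_int a b c ha hb hc).const_mul B) ?_ ?_
  · have h1 := LA_meas (n := n)
    have h2 := LB_meas (n := n)
    have h3 := LC_meas (n := n)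
    have h4 := (evy_cont f).measurable
    exact Measurable.aestronglyMeasurable (by fun_prop)
  · filter_upwards [ae_restrict_mem U_meas] with y hy
    rw [Real.norm_of_nonneg (by positivity)]
    exact mul_le_mul_of_nonneg_right (hB y hy) (Real.exp_pos _).le

lemma pw_meas (s : ℂ) : Measurable (pw s) := by
  unfold pw
  refine Measurable.ite measurableSet_Ioi ?_ measurable_const
  fun_prop

lemma W_meas (p : P3) : Measurable (W (n := n) p) := by
  unfold W
  refine Measurable.mul ?_ ?_
  · refine Finset.measurable_fun_prod _ fun i _ => Measurable.mul ?_ ?_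
    · exact (pw_meas _).comp (measurable_pi_apply i)
    · exact (pw_meas _).comp (measurable_const.sub (measurable_pi_apply i))
  · refine Finset.measurable_fun_prod _ fun q _ => (pw_meas _).comp ?_
    have h : Measurable (fun y : Fin n → ℝ => y q.1 - y q.2) :=
      (measurable_pi_apply q.1).sub (measurable_pi_apply q.2)
    exact continuous_abs.measurable.comp h

lemma W_int (f : MvPolynomial (Fin n) ℂ) {p : P3} (hp : p ∈ Hs (-1) (-1) 0) :
    Integrable (fun y => evy y f * W p y) := by
  have h1 : IntegrableOn (fun y => evy y f * W p y) (U n) := by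
    refine Integrable.mono' (evexp_int f _ _ _ hp.1 hp.2.1 hp.2.2)
      ((evy_cont f).measurable.mul (W_meas p)).aestronglyMeasurable ?_
    filter_upwards [ae_restrict_mem U_meas] with y hy
    rw [norm_mul, W_norm p hy]
  rw [← integrableOn_univ, ← Set.union_compl_self (U n), integrableOn_union]
  refine ⟨h1, ?_⟩
  refine (integrableOn_zero).congr_fun (fun y hy => ?_) U_meas.compl
  rw [W_off p hy, mul_zero]

lemma W_div_int (f : MvPolynomial (Fin n) ℂ) {p : P3} (hp : p ∈ Hs 1 1 1) {i j : Fin n} (h : i ≠ j) :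
    Integrable (fun y => evy y f * W p y / ((y i - y j : ℝ) : ℂ)) := by
  have h1 : IntegrableOn (fun y => evy y f * W p y / ((y i - y j : ℝ) : ℂ)) (U n) := by
    refine Integrable.mono' (evexp_int f p.1.re p.2.1.re (p.2.2.re - 1) (by linarith [hp.1])
      (by linarith [hp.2.1]) (by linarith [hp.2.2])) ?_ ?_
    · refine Measurable.aestronglyMeasurable ?_
      refine ((evy_cont f).measurable.mul (W_meas p)).div ?_
      exact Complex.measurable_ofReal.comp ((measurable_pi_apply i).sub (measurable_pi_apply j))
    filter_upwards [ae_restrict_mem U_meas] with y hy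
    have hpos : 0 < |y i - y j| := abs_pos.2 (sub_ne_zero.2 (hy.2 i j h))
    rw [norm_div, norm_mul, W_norm p hy, Complex.norm_real, Real.norm_eq_abs]
    rw [mul_div_assoc]
    refine mul_le_mul_of_nonneg_left ?_ (norm_nonneg _)
    conv_lhs => rw [← Real.exp_log hpos]
    rw [← Real.exp_sub]
    refine Real.exp_le_exp.2 ?_
    have := LC_le hy h
    linarith
  rw [← integrableOn_univ, ← Set.union_compl_self (U n), integrableOn_union]
  refine ⟨h1, ?_⟩
  refine (integrableOn_zero).congr_fun (fun y hy => ?_) U_meas.compl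
  rw [W_off p hy, mul_zero, zero_div]

lemma II_an (f : MvPolynomial (Fin n) ℂ) : AnalyticOnNhd ℂ (II f) (Hs (-1) (-1) 0) := by
  have h := analytic_param (volume.restrict (U n)) (LA (n := n)) LB LC (fun y => evy y f) LA_meas LB_meas
    LC_meas (evy_cont f).measurable.aestronglyMeasurable
    ((ae_restrict_mem U_meas).mono fun y hy => LA_np hy)
    ((ae_restrict_mem U_meas).mono fun y hy => LB_np hy)
    ((ae_restrict_mem U_meas).mono fun y hy => LC_np hy)
    (fun a b c ha hb hc => evexp_int f a b c ha hb hc)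
  convert h using 1
  funext p
  rw [II, ← setIntegral_eq_integral_of_forall_compl_eq_zero (s := U n)]
  · refine setIntegral_congr_fun U_meas fun y hy => ?_
    beta_reduce
    rw [W_on p hy]
  · intro y hy
    rw [W_off p hy, mul_zero]

lemma II_add (f g : MvPolynomial (Fin n) ℂ) {p : P3} (hp : p ∈ Hs (-1) (-1) 0) :
    II (f + g) p = II f p + II g p := by
  unfold II
  rw [← integral_add (W_int f hp) (W_int g hp)]
  congr 1; funext y
  rw [evy, evy, evy, map_add]; ring

lemma II_smul (a : ℂ) (f : MvPolynomial (Fin n) ℂ) (p : P3) :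
    II (C a * f) p = a * II f p := by
  unfold II
  rw [← integral_const_mul]
  congr 1; funext y
  rw [evy, evy, map_mul, eval_C]; ring

lemma II_sha (f : MvPolynomial (Fin n) ℂ) (p : P3) :
    II f (p + (1, 0, 0)) = II ((∏ i, X i) * f) p := by
  unfold II
  congr 1; funext y
  rw [evy, evy, map_mul, map_prod]
  simp only [W, Prod.fst_add, Prod.snd_add, pw_add_one, add_zero, eval_X, Finset.prod_mul_distrib]
  ring

lemma II_shb (f : MvPolynomial (Fin n) ℂ) (p : P3) :
    II f (p + (0, 1, 0)) = II ((∏ i, (1 - X i)) * f) p := by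
  unfold II
  congr 1; funext y
  rw [evy, evy, map_mul, map_prod]
  simp only [W, Prod.fst_add, Prod.snd_add, pw_add_one, add_zero, eval_X, Finset.prod_mul_distrib,
    map_sub, map_one]
  push_cast
  ring

lemma II_shc (f : MvPolynomial (Fin n) ℂ) (p : P3) :
    II f (p + (0, 0, 2)) = II (EE n ℂ ^ 2 * f) p := by
  unfold II
  congr 1; funext y
  have h : ∀ (s : ℂ) (t : ℝ), pw (s + 2) |t| = (t : ℂ) ^ 2 * pw s |t| := by
    intro s t
    have : s + 2 = s + 1 + 1 := by ring
    rw [this, pw_add_one, pw_add_one, ← mul_assoc, ← pow_two]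
    congr 1
    rw [← Complex.ofReal_pow, sq_abs, Complex.ofReal_pow]
  rw [evy, evy, map_mul, map_pow, EE, map_prod]
  simp only [W, Prod.fst_add, Prod.snd_add, h, add_zero, eval_X, Finset.prod_mul_distrib,
    map_sub, Complex.ofReal_sub]
  rw [Finset.prod_pow]
  ring

lemma W_perm (p : P3) (σ : Equiv.Perm (Fin n)) (y : Fin n → ℝ) : W p (y ∘ σ) = W p y := by
  unfold W
  congr 1
  · exact Equiv.prod_comp σ (fun i => pw p.1 (y i) * pw p.2.1 (1 - y i))
  · refine Finset.prod_bij (fun q _ => (σ q.1, σ q.2)) ?_ ?_ ?_ ?_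
    · intro q hq
      simp only [Finset.mem_offDiag, Finset.mem_univ, true_and] at hq ⊢
      exact fun h => hq (σ.injective h)
    · intro q _ q' _ h
      simp only [Prod.mk.injEq, EmbeddingLike.apply_eq_iff_eq] at h
      exact Prod.ext h.1 h.2
    · intro q hq
      refine ⟨(σ.symm q.1, σ.symm q.2), ?_, by simp⟩
      simp only [Finset.mem_offDiag, Finset.mem_univ, true_and] at hq ⊢
      exact fun h => hq (σ.symm.injective h)
    · intro q _; rfl

lemma int_perm (σ : Equiv.Perm (Fin n)) (G : (Fin n → ℝ) → ℂ) : ∫ y, G (y ∘ σ) = ∫ y, G y := by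
  have h := volume_preserving_arrowCongr' (α₁ := Fin n) (β₁ := ℝ) (α₂ := Fin n) (β₂ := ℝ) σ.symm (MeasurableEquiv.refl ℝ)
    (MeasurePreserving.id _)
  have h2 := h.integral_comp (MeasurableEquiv.measurableEmbedding _) G
  rw [← h2]
  rfl

lemma evy_sw (i j : Fin n) (f : MvPolynomial (Fin n) ℂ) (y : Fin n → ℝ) :
    evy y (sw i j f) = evy (y ∘ Equiv.swap i j) f := by
  rw [evy, evy, sw, eval_rename]; rfl

lemma II_sw (i j : Fin n) (f : MvPolynomial (Fin n) ℂ) (p : P3) : II (sw i j f) p = II f p := by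
  unfold II
  rw [← int_perm (Equiv.swap i j) (fun y => evy y f * W p y)]
  congr 1; funext y
  rw [evy_sw, W_perm]

end SelE
namespace SelE
open MvPolynomial SelA

lemma pw_norm_le (s : ℂ) (t : ℝ) : ‖pw s t‖ ≤ |t| ^ s.re := by
  by_cases h : 0 < t
  · rw [pw, if_pos h, Complex.norm_cpow_eq_rpow_re_of_pos h, abs_of_pos h]
  · rw [pw_npos _ (not_lt.1 h), norm_zero]; positivity

lemma pw_deriv (s : ℂ) (hs : 1 < s.re) (t : ℝ) : HasDerivAt (pw s) (s / t * pw s t) t := by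
  rcases lt_trichotomy t 0 with h | h | h
  · rw [pw_npos _ h.le, mul_zero]
    refine (hasDerivAt_const t (0 : ℂ)).congr_of_eventuallyEq ?_
    filter_upwards [Iio_mem_nhds h] with u hu
    exact pw_npos _ (le_of_lt hu)
  · subst h
    rw [pw_npos _ le_rfl, mul_zero, hasDerivAt_iff_isLittleO_nhds_zero]
    simp only [zero_add, pw_npos _ (le_refl (0 : ℝ)), sub_zero, smul_zero]
    rw [Asymptotics.isLittleO_iff]
    intro c hc
    have hcont : Filter.Tendsto (fun t : ℝ => |t| ^ (s.re - 1)) (nhds 0) (nhds 0) := by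
      have : Continuous (fun t : ℝ => |t| ^ (s.re - 1)) :=
        continuous_abs.rpow_const (fun _ => Or.inr (by linarith))
      have h := this.tendsto 0
      rwa [abs_zero, Real.zero_rpow (by linarith)] at h
    filter_upwards [hcont (Iio_mem_nhds hc)] with u hu
    refine (pw_norm_le s u).trans ?_
    have h2 : |u| ^ s.re = |u| ^ (s.re - 1) * |u| := by
      conv_lhs => rw [show s.re = (s.re - 1) + 1 by ring]
      rw [Real.rpow_add_one' (abs_nonneg _) (by linarith)]
    rw [h2, Real.norm_eq_abs]
    exact mul_le_mul_of_nonneg_right (le_of_lt hu) (abs_nonneg _)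
  · have hs0 : s ≠ 0 := by rintro rfl; simp at hs; linarith
    have hmem : (t : ℂ) ∈ Complex.slitPlane := by simp [Complex.slitPlane, h]
    have h1 := ((hasDerivAt_id (t : ℂ)).cpow_const (c := s) hmem).comp_ofReal
    have ht : (t : ℂ) ≠ 0 := by exact_mod_cast h.ne'
    have h2 : s / t * pw s t = s * (id (t : ℂ)) ^ (s - 1) * 1 := by
      rw [pw, if_pos h, id, Complex.cpow_sub _ _ ht, Complex.cpow_one]
      field_simp
    rw [h2]
    refine h1.congr_of_eventuallyEq ?_
    filter_upwards [Ioi_mem_nhds h] with u hu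
    rw [pw, if_pos (Set.mem_Ioi.1 hu)]; rfl

lemma pw_abs (s : ℂ) (t : ℝ) : pw s |t| = pw s t + pw s (-t) := by
  rcases le_total 0 t with h | h
  · rw [abs_of_nonneg h, pw_npos s (by linarith : -t ≤ 0), add_zero]
  · rw [abs_of_nonpos h, pw_npos s h, zero_add]

lemma pwabs_deriv (s : ℂ) (hs : 1 < s.re) (t : ℝ) :
    HasDerivAt (fun t => pw s |t|) (s / t * pw s |t|) t := by
  simp only [pw_abs]
  have h := (pw_deriv s hs t).add ((pw_deriv s hs (-t)).scomp t (hasDerivAt_neg t))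
  refine h.congr_deriv ?_
  rw [mul_add]
  congr 1
  push_cast
  rw [div_neg]
  simp

/-- log derivative at zero -/
def LD (u : ℝ → ℂ) (l : ℂ) : Prop := HasDerivAt u (l * u 0) 0

lemma LD.mul {u v : ℝ → ℂ} {l m : ℂ} (hu : LD u l) (hv : LD v m) :
    LD (fun t => u t * v t) (l + m) := by
  have h := HasDerivAt.mul hu hv
  unfold LD
  refine h.congr_deriv ?_
  ring

lemma LD.prod {ι : Type} (s : Finset ι) {u : ι → ℝ → ℂ} {l : ι → ℂ} (h : ∀ i ∈ s, LD (u i) (l i)) :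
    LD (fun t => ∏ i ∈ s, u i t) (∑ i ∈ s, l i) := by
  classical
  induction s using Finset.induction_on with
  | empty => simp [LD, hasDerivAt_const]
  | insert a s ha ih =>
    simp only [Finset.prod_insert ha, Finset.sum_insert ha]
    exact (h a (Finset.mem_insert_self _ _)).mul (ih fun i hi => h i (Finset.mem_insert_of_mem hi))

lemma lin_deriv (a e : ℝ) : HasDerivAt (fun t : ℝ => a + t * e) e 0 := by
  simpa using ((hasDerivAt_id (0 : ℝ)).mul_const e).const_add a

lemma LD_pw (s : ℂ) (hs : 1 < s.re) (a e : ℝ) : LD (fun t => pw s (a + t * e)) (e * (s / a)) := by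
  have h0 : a + (0 : ℝ) * e = a := by ring
  have h1 := pw_deriv s hs (a + (0 : ℝ) * e)
  have h := h1.scomp (0 : ℝ) (lin_deriv a e)
  unfold LD
  refine h.congr_deriv ?_
  simp only [zero_mul, add_zero]
  rw [ Complex.real_smul, mul_assoc]

lemma LD_pwabs (s : ℂ) (hs : 1 < s.re) (a e : ℝ) : LD (fun t => pw s |a + t * e|) (e * (s / a)) := by
  have h0 : a + (0 : ℝ) * e = a := by ring
  have h1 := pwabs_deriv s hs (a + (0 : ℝ) * e)
  have h := h1.scomp (0 : ℝ) (lin_deriv a e)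
  unfold LD
  refine h.congr_deriv ?_
  simp only [zero_mul, add_zero]
  rw [ Complex.real_smul, mul_assoc]

variable {n : ℕ}

/-- basis vector -/
def bv (i : Fin n) : Fin n → ℝ := Pi.single i 1

lemma bv_sum (i : Fin n) (g : Fin n → ℂ) : ∑ k, (bv i k : ℂ) * g k = g i := by
  rw [Finset.sum_eq_single i]
  · simp [bv]
  · intro b _ hb; simp [bv, hb]
  · simp

lemma W_LD {p : P3} (hp : p ∈ Hs 1 1 1) (i : Fin n) (y : Fin n → ℝ) :
    LD (fun t => W p (y + t • bv i))
      (p.1 / y i - p.2.1 / (1 - y i : ℝ) +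
        ∑ j ∈ Finset.univ.erase i, 2 * p.2.2 / ((y i - y j : ℝ) : ℂ)) := by
  have h1 : LD (fun t => ∏ k, (pw p.1 ((y + t • bv i) k) * pw p.2.1 (1 - (y + t • bv i) k)))
      (∑ k, ((bv i k : ℝ) * (p.1 / y k) + ((-bv i k : ℝ) : ℂ) * (p.2.1 / (1 - y k : ℝ)))) := by
    refine LD.prod _ fun k _ => LD.mul ?_ ?_
    · exact LD_pw p.1 hp.1 (y k) (bv i k)
    · have h := LD_pw p.2.1 hp.2.1 (1 - y k) (-bv i k)
      convert h using 3
      simp [Pi.add_apply]; ring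
  have h2 : LD (fun t => ∏ q ∈ (Finset.univ : Finset (Fin n)).offDiag,
      pw p.2.2 |(y + t • bv i) q.1 - (y + t • bv i) q.2|)
      (∑ q ∈ (Finset.univ : Finset (Fin n)).offDiag,
        ((bv i q.1 - bv i q.2 : ℝ) : ℂ) * (p.2.2 / (y q.1 - y q.2 : ℝ))) := by
    refine LD.prod _ fun q _ => ?_
    have h := LD_pwabs p.2.2 hp.2.2 (y q.1 - y q.2) (bv i q.1 - bv i q.2)
    convert h using 4
    simp [Pi.add_apply]; ring
  have h := h1.mul h2
  unfold W
  convert h using 1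
  congr 1
  · simp only [Complex.ofReal_neg, neg_mul]
    rw [Finset.sum_add_distrib, Finset.sum_neg_distrib, bv_sum i (fun k => p.1 / y k),
      bv_sum i (fun k => p.2.1 / (1 - y k : ℝ))]
    ring
  · have h3 : ∑ q ∈ (Finset.univ : Finset (Fin n)).offDiag,
        ((bv i q.1 - bv i q.2 : ℝ) : ℂ) * (p.2.2 / (y q.1 - y q.2 : ℝ)) =
        ∑ q : Fin n × Fin n,
        ((bv i q.1 - bv i q.2 : ℝ) : ℂ) * (p.2.2 / (y q.1 - y q.2 : ℝ)) := by
      refine Finset.sum_subset (Finset.subset_univ _) fun q _ hq => ?_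
      have : q.1 = q.2 := by
        by_contra hne
        exact hq (Finset.mem_offDiag.2 ⟨Finset.mem_univ _, Finset.mem_univ _, hne⟩)
      rw [this]; simp
    have h4 : ∑ j ∈ Finset.univ.erase i, 2 * p.2.2 / ((y i - y j : ℝ) : ℂ) =
        ∑ j, 2 * p.2.2 / ((y i - y j : ℝ) : ℂ) := by
      refine Finset.sum_subset (Finset.subset_univ _) fun q _ hq => ?_
      have : q = i := by simpa using hq
      rw [this]; simp
    rw [h3, h4, Fintype.sum_prod_type]
    simp only [Complex.ofReal_sub (bv i _), sub_mul, Finset.sum_sub_distrib]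
    simp only [← Finset.mul_sum]
    rw [bv_sum i (fun k => ∑ j, p.2.2 / ((y k - y j : ℝ) : ℂ))]
    simp only [bv_sum i (fun j => p.2.2 / ((y _ - y j : ℝ) : ℂ))]
    rw [← Finset.sum_sub_distrib]
    refine Finset.sum_congr rfl fun j _ => ?_
    have : ((y j - y i : ℝ) : ℂ) = -((y i - y j : ℝ) : ℂ) := by push_cast; ring
    rw [this, div_neg]
    ring

lemma evy_deriv (i : Fin n) (y : Fin n → ℝ) (f : MvPolynomial (Fin n) ℂ) :
    HasDerivAt (fun t : ℝ => evy (y + t • bv i) f) (evy y (pderiv i f)) 0 := by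
  have hy : y + (0 : ℝ) • bv i = y := by simp
  induction f using MvPolynomial.induction_on with
  | C a => simp [evy, hasDerivAt_const]
  | add f g hf hg =>
    have := hf.add hg
    simp only [evy, map_add] at this ⊢
    exact this
  | mul_X f k hf =>
    have hk : HasDerivAt (fun t : ℝ => evy (y + t • bv i) (X k)) ((bv i k : ℝ) : ℂ) 0 := by
      simp only [evy, eval_X]
      exact (lin_deriv (y k) (bv i k)).ofReal_comp
    have h := hf.mul hk
    rw [hy] at h
    have e1 : evy y (pderiv i (f * X k)) =
        evy y (pderiv i f) * evy y (X k) + evy y f * ((bv i k : ℝ) : ℂ) := by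
      rw [Derivation.leibniz, pderiv_X]
      simp only [evy, map_add, smul_eq_mul, map_mul, bv, Pi.single_apply]
      split_ifs <;> simp <;> ring
    rw [e1]
    refine h.congr_of_eventuallyEq (Filter.Eventually.of_forall fun t => ?_)
    simp [evy]

lemma II_D {p : P3} (hp : p ∈ Hs 1 1 1) {i j : Fin n} (h : i ≠ j) (g : MvPolynomial (Fin n) ℂ) :
    2 * ∫ y, evy y g * W p y / ((y i - y j : ℝ) : ℂ) = ∫ y, evy y (D i j g) * W p y := by
  have h1 : ∫ y, -(evy y (sw i j g) * W p y / ((y i - y j : ℝ) : ℂ)) =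
      ∫ y, evy y g * W p y / ((y i - y j : ℝ) : ℂ) := by
    rw [← int_perm (Equiv.swap i j) (fun y => evy y g * W p y / ((y i - y j : ℝ) : ℂ))]
    congr 1; funext y
    rw [evy_sw, W_perm]
    simp only [Function.comp, Equiv.swap_apply_left, Equiv.swap_apply_right]
    have : ((y j - y i : ℝ) : ℂ) = -((y i - y j : ℝ) : ℂ) := by push_cast; ring
    rw [this, div_neg]
  rw [two_mul]
  nth_rewrite 2 [← h1]
  rw [← integral_add (W_div_int g hp h) (show Integrable (fun y => -(evy y (sw i j g) * W p y /
    ((y i - y j : ℝ) : ℂ))) from (W_div_int (sw i j g) hp h).neg)]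
  congr 1; funext y
  by_cases hy : y ∈ U n
  · have hne : ((y i - y j : ℝ) : ℂ) ≠ 0 := by
      exact_mod_cast sub_ne_zero.2 (hy.2 i j h)
    have hs : evy y g - evy y (sw i j g) = ((y i - y j : ℝ) : ℂ) * evy y (D i j g) := by
      have := congrArg (evy y) (D_spec i j g)
      simpa [evy] using this
    have : evy y g = evy y (sw i j g) + ((y i - y j : ℝ) : ℂ) * evy y (D i j g) := by
      rw [← hs]; ring
    rw [this]
    field_simp
    ring
  · simp [W_off p hy]

lemma Hs_sub {p : P3} (hp : p ∈ Hs 1 1 1) : p ∈ Hs (-1) (-1) 0 :=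
  ⟨by linarith [hp.1], by linarith [hp.2.1], by linarith [hp.2.2]⟩

lemma ibp0 {p : P3} (hp : p ∈ Hs 1 1 1) (i : Fin n) (f : MvPolynomial (Fin n) ℂ) :
    ∫ y, (evy y (X i*(1-X i)*pderiv i f + (C (p.1+1)*(1-X i) - C (p.2.1+1)*X i)*f) * W p y +
      ∑ j ∈ Finset.univ.erase i, p.2.2 * (2 *
        (evy y (X i * (1 - X i) * f) * W p y / ((y i - y j : ℝ) : ℂ)))) = 0 := by
  set g : MvPolynomial (Fin n) ℂ := X i * (1 - X i) * f with hg
  set G : (Fin n → ℝ) → ℂ := fun y => evy y g * W p y with hG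
  set G' : (Fin n → ℝ) → ℂ := fun y =>
    (evy y (X i*(1-X i)*pderiv i f + (C (p.1+1)*(1-X i) - C (p.2.1+1)*X i)*f) * W p y +
      ∑ j ∈ Finset.univ.erase i, p.2.2 * (2 *
        (evy y g * W p y / ((y i - y j : ℝ) : ℂ)))) with hG'
  have hint : Integrable G' := by
    refine (W_int _ (Hs_sub hp)).add (integrable_finsetSum _ fun j hj => ?_)
    exact ((W_div_int g hp (Finset.ne_of_mem_erase hj).symm).const_mul 2).const_mul _
  have hder : ∀ y, HasLineDerivAt ℝ G (G' y) y (bv i) := by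
    intro y
    have h1 := evy_deriv i y g
    have h2 := W_LD hp i y
    unfold LD at h2
    have h := h1.mul h2
    unfold HasLineDerivAt
    have hy0 : y + (0 : ℝ) • bv i = y := by simp
    rw [hy0] at h
    refine HasDerivAt.congr_deriv h (Eq.symm ?_)
    by_cases hy : y ∈ U n
    · have e1 : evy y (pderiv i g) = (1 - 2 * (y i : ℂ)) * evy y f +
          (y i : ℂ) * (1 - y i) * evy y (pderiv i f) := by
        rw [hg]
        simp only [Derivation.leibniz, map_sub, pderiv_X_self, pderiv_one, evy, smul_eq_mul, map_add,
          map_mul, eval_X, map_one, map_zero]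
        ring
      have e2 : evy y g = (y i : ℂ) * (1 - y i) * evy y f := by
        simp [hg, evy]
      have hyi : (y i : ℂ) ≠ 0 := by exact_mod_cast (hy.1 i).1.ne'
      have hyi2 : (1 - y i : ℂ) ≠ 0 := by
        have := (hy.1 i).2
        have h : (1 - y i : ℝ) ≠ 0 := by linarith
        exact_mod_cast h
      have e3 : evy y (X i*(1-X i)*pderiv i f + (C (p.1+1)*(1-X i) - C (p.2.1+1)*X i)*f) =
          (y i : ℂ) * (1 - y i) * evy y (pderiv i f) +
            ((p.1 + 1) * (1 - y i) - (p.2.1 + 1) * y i) * evy y f := by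
        simp [evy]
      have e4 : evy y g * (p.1 / y i - p.2.1 / (1 - y i : ℝ)) =
          (p.1 * (1 - y i) - p.2.1 * y i) * evy y f := by
        rw [e2]; push_cast; field_simp
      have e5 : ∑ j ∈ Finset.univ.erase i, p.2.2 * (2 *
          (evy y g * W p y / ((y i - y j : ℝ) : ℂ))) = evy y g *
          (∑ j ∈ Finset.univ.erase i, 2 * p.2.2 / ((y i - y j : ℝ) : ℂ)) * W p y := by
        rw [Finset.mul_sum, Finset.sum_mul]
        refine Finset.sum_congr rfl fun j _ => ?_
        ring
      rw [hG']
      simp only [hy0]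
      rw [e5, e3, e1]
      linear_combination (-(W p y)) * e4
    · simp [hG', W_off p hy]
  have key := integral_bilinear_hasLineDerivAt_right_eq_neg_left_of_integrable (μ := volume)
    (f := G) (f' := G') (g := fun _ => (1 : ℂ)) (g' := fun _ => 0) (v := bv i)
    (B := ContinuousLinearMap.mul ℝ ℂ) (by simpa using hint) (by simp)
    (by simpa using W_int g (Hs_sub hp)) (fun y _ => hder y)
    (fun y _ => by simpa [HasLineDerivAt] using hasDerivAt_const (0 : ℝ) (1 : ℂ))
  simp only [ContinuousLinearMap.mul_apply', mul_zero, integral_zero, mul_one] at key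
  exact neg_eq_zero.1 key.symm

lemma II_ibp {p : P3} (hp : p ∈ Hs 1 1 1) (i : Fin n) (f : MvPolynomial (Fin n) ℂ) :
    II (L (p.1 + 1) (p.2.1 + 1) p.2.2 i f) p = 0 := by
  have h0 := ibp0 hp i f
  set g : MvPolynomial (Fin n) ℂ := X i * (1 - X i) * f with hg
  have hi1 : ∀ j ∈ Finset.univ.erase i, Integrable (fun y => p.2.2 * (2 *
        (evy y g * W p y / ((y i - y j : ℝ) : ℂ)))) := fun j hj =>
    ((W_div_int g hp (Finset.ne_of_mem_erase hj).symm).const_mul 2).const_mul _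
  have hi2 : ∀ j ∈ Finset.univ.erase i, Integrable (fun y => p.2.2 *
        (evy y (D i j g) * W p y)) := fun j _ => (W_int _ (Hs_sub hp)).const_mul _
  rw [integral_add (W_int _ (Hs_sub hp)) (integrable_finsetSum _ hi1),
    integral_finsetSum _ hi1] at h0
  rw [← h0]
  unfold II
  have : ∀ y, evy y (L (p.1 + 1) (p.2.1 + 1) p.2.2 i f) * W p y =
      evy y (X i*(1-X i)*pderiv i f + (C (p.1+1)*(1-X i) - C (p.2.1+1)*X i)*f) * W p y +
      ∑ j ∈ Finset.univ.erase i, p.2.2 * (evy y (D i j g) * W p y) := by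
    intro y
    rw [← Finset.mul_sum, ← Finset.sum_mul, ← mul_assoc, ← add_mul]
    congr 1
    simp only [L, evy, map_add, map_mul, eval_C, map_sum, hg]
  simp only [this]
  rw [integral_add (W_int _ (Hs_sub hp)) (integrable_finsetSum _ hi2),
    integral_finsetSum _ hi2]
  congr 1
  refine Finset.sum_congr rfl fun j hj => ?_
  rw [integral_const_mul, integral_const_mul, integral_const_mul,
    II_D hp (Finset.ne_of_mem_erase hj).symm]

lemma good : Good n (II (n := n)) where
  an := II_an
  add := fun f g p hp => II_add f g hp
  smul := fun a f p _ => II_smul a f p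
  sha := II_sha
  shb := II_shb
  shc := II_shc
  swp := fun i j f p _ => II_sw i j f p
  ibp := fun i f p hp => II_ibp hp i f

end SelE
namespace SelE
open MvPolynomial SelA

variable {n : ℕ}

lemma S_meas : MeasurableSet (orderedSimplex n) := by
  have : orderedSimplex n = (⋂ i, {y : Fin n → ℝ | 0 < y i ∧ y i < 1}) ∩
      ⋂ i, ⋂ j, {y : Fin n → ℝ | i < j → y j < y i} := by
    ext y; simp [orderedSimplex]
  rw [this]
  refine MeasurableSet.inter (MeasurableSet.iInter fun i => ?_)
    (MeasurableSet.iInter fun i => MeasurableSet.iInter fun j => ?_)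
  · exact (measurableSet_lt measurable_const (measurable_pi_apply i)).inter
      (measurableSet_lt (measurable_pi_apply i) measurable_const)
  · by_cases h : i < j
    · simp only [h, forall_true_left]
      exact measurableSet_lt (measurable_pi_apply j) (measurable_pi_apply i)
    · simp [h]

lemma S_anti {y : Fin n → ℝ} (hy : y ∈ orderedSimplex n) : StrictAnti y := fun i j h => hy.2 i j h

lemma S_sub {y : Fin n → ℝ} (hy : y ∈ orderedSimplex n) : y ∈ U n :=
  ⟨hy.1, fun _ _ h he => h ((S_anti hy).injective he)⟩

lemma U_perm {y : Fin n → ℝ} (σ : Equiv.Perm (Fin n)) (hy : y ∘ σ ∈ U n) : y ∈ U n := by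
  refine ⟨fun i => ?_, fun i j h => ?_⟩
  · simpa using hy.1 (σ.symm i)
  · simpa using hy.2 (σ.symm i) (σ.symm j) (fun he => h (σ.symm.injective he))

lemma U_sort {y : Fin n → ℝ} (hy : y ∈ U n) : ∃ σ : Equiv.Perm (Fin n), y ∘ σ ∈ orderedSimplex n := by
  have hm := Tuple.monotone_sort (fun i => -y i)
  refine ⟨Tuple.sort (fun i => -y i), fun i => hy.1 _, fun i j h => ?_⟩
  have h1 := hm h.le
  simp only [Function.comp] at h1 ⊢
  refine lt_of_le_of_ne (by linarith) (hy.2 _ _ fun he => ?_)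
  exact h.ne' ((Tuple.sort (fun i => -y i)).injective he)

lemma U_uniq {y : Fin n → ℝ} {σ τ : Equiv.Perm (Fin n)} (h1 : y ∘ σ ∈ orderedSimplex n)
    (h2 : y ∘ τ ∈ orderedSimplex n) : σ = τ := by
  have hy := U_perm σ (S_sub h1)
  have hinj : Function.Injective y := fun i j h => by
    by_contra hne; exact hy.2 i j hne h
  have : y ∘ σ = y ∘ τ := by
    have e : ∀ ρ : Equiv.Perm (Fin n), Set.range (y ∘ ρ) = Set.range y := fun ρ => by
      rw [Set.range_comp, ρ.range_eq_univ, Set.image_univ]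
    have g1 : StrictMono (fun i => -(y ∘ σ) i) := fun i j h => neg_lt_neg (S_anti h1 h)
    have g2 : StrictMono (fun i => -(y ∘ τ) i) := fun i j h => neg_lt_neg (S_anti h2 h)
    have h3 : (fun i => -(y ∘ σ) i) = (fun i => -(y ∘ τ) i) := by
      rw [← g1.range_inj g2]
      have e' : ∀ ρ : Equiv.Perm (Fin n), Set.range (fun i => -(y ∘ ρ) i) =
          Neg.neg '' Set.range y := fun ρ => by
        rw [← e ρ, ← Set.range_comp]; rfl
      rw [e', e']
    funext i
    exact neg_injective (congrFun h3 i)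
  ext i
  exact congrArg Fin.val (hinj (congrFun this i))

lemma fold (H : (Fin n → ℝ) → ℂ) (hi : Integrable H) (h0 : ∀ y ∉ U n, H y = 0)
    (hs : ∀ (σ : Equiv.Perm (Fin n)) y, H (y ∘ σ) = H y) :
    ∫ y, H y = (n.factorial : ℂ) * ∫ y in orderedSimplex n, H y := by
  classical
  set K : (Fin n → ℝ) → ℂ := (orderedSimplex n).indicator H with hK
  have h1 : ∀ y, H y = ∑ σ : Equiv.Perm (Fin n), K (y ∘ σ) := by
    intro y
    by_cases hy : y ∈ U n
    · obtain ⟨σ, hσ⟩ := U_sort hy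
      rw [Finset.sum_eq_single σ]
      · rw [hK, Set.indicator_of_mem hσ, hs]
      · intro τ _ hτ
        exact Set.indicator_of_notMem (fun h => hτ (U_uniq h hσ)) _
      · simp
    · rw [h0 y hy, Finset.sum_eq_zero]
      intro σ _
      exact Set.indicator_of_notMem (fun h => hy (U_perm σ (S_sub h))) _
  have hint : ∀ σ : Equiv.Perm (Fin n), Integrable (fun y => K (y ∘ σ)) := by
    intro σ
    have : (fun y => K (y ∘ σ)) = ((fun y : Fin n → ℝ => y ∘ σ) ⁻¹' orderedSimplex n).indicator H := by
      funext y
      by_cases h : y ∘ σ ∈ orderedSimplex n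
      · rw [hK, Set.indicator_of_mem h, Set.indicator_of_mem (by exact h), hs]
      · rw [hK, Set.indicator_of_notMem h, Set.indicator_of_notMem (by exact h)]
    rw [this]
    refine hi.indicator (S_meas.preimage ?_)
    exact measurable_pi_lambda _ fun i => measurable_pi_apply _
  have e : ∫ y, H y = ∫ y, ∑ σ : Equiv.Perm (Fin n), K (y ∘ σ) := integral_congr_ae
    (Filter.Eventually.of_forall h1)
  rw [e, integral_finsetSum _ fun σ _ => hint σ]
  simp_rw [int_perm]
  rw [Finset.sum_const, Finset.card_univ, Fintype.card_perm, Fintype.card_fin, nsmul_eq_mul]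
  congr 1
  rw [hK, integral_indicator S_meas]

/-- cleared numerator -/
def qq (d : ℕ) (c : (Fin n → ℤ) →₀ ℂ) : MvPolynomial (Fin n) ℂ :=
  c.sum fun k a => monomial (Finsupp.equivFunOnFinite.symm fun i => (k i + d).toNat) a

lemma qq_ev {d : ℕ} {c : (Fin n → ℤ) →₀ ℂ} (hd : ∀ k ∈ c.support, ∀ i, -(d : ℤ) ≤ k i)
    {y : Fin n → ℝ} (hy : y ∈ U n) :
    evy y (qq d c) = laurentEval c y * ∏ i, (y i : ℂ) ^ d := by
  unfold evy qq laurentEval Finsupp.sum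
  rw [map_sum, Finset.sum_mul]
  refine Finset.sum_congr rfl fun k hk => ?_
  rw [eval_monomial, Finsupp.prod_fintype _ _ (by simp), mul_assoc, ← Finset.prod_mul_distrib]
  congr 1
  refine Finset.prod_congr rfl fun i _ => ?_
  have hyi : (y i : ℂ) ≠ 0 := by exact_mod_cast (hy.1 i).1.ne'
  have hz : (((k i + d).toNat : ℕ) : ℤ) = k i + d := Int.toNat_of_nonneg (by linarith [hd k hk i])
  rw [← zpow_natCast, ← zpow_natCast, ← zpow_add₀ hyi]
  simp only [Finsupp.equivFunOnFinite_symm_apply_apply, hz]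

lemma pw_sub_nat (α : ℂ) (d : ℕ) {t : ℝ} (ht : 0 < t) : (t : ℂ) ^ d * pw (α - d) t = (t : ℂ) ^ α := by
  have h0 : (t : ℂ) ≠ 0 := by exact_mod_cast ht.ne'
  rw [pw, if_pos ht, Complex.cpow_sub _ _ h0, Complex.cpow_natCast]
  field_simp

lemma vand (γ : ℂ) {y : Fin n → ℝ} (hy : y ∈ orderedSimplex n) :
    ∏ q ∈ (Finset.univ : Finset (Fin n)).offDiag, pw γ |y q.1 - y q.2| =
    ∏ i : Fin n, ∏ j : Fin n,
      if i < j then (((y i - y j : ℝ)) : ℂ) ^ (2 * γ) else 1 := by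
  have e1 : ∏ q ∈ (Finset.univ : Finset (Fin n)).offDiag, pw γ |y q.1 - y q.2| =
      ∏ q : Fin n × Fin n, if q.1 ≠ q.2 then pw γ |y q.1 - y q.2| else 1 := by
    rw [← Finset.prod_filter]
    refine Finset.prod_congr ?_ fun _ _ => rfl
    ext q; simp
  have e2 : ∀ i j : Fin n, (if i ≠ j then pw γ |y i - y j| else 1) =
      (if i < j then pw γ |y i - y j| else 1) * (if j < i then pw γ |y j - y i| else 1) := by
    intro i j
    rcases lt_trichotomy i j with h | h | h
    · simp [h, h.ne, h.not_gt]
    · simp [h]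
    · simp [h, h.ne', h.not_gt, abs_sub_comm]
  rw [e1, Fintype.prod_prod_type]
  simp only [e2, Finset.prod_mul_distrib]
  nth_rewrite 2 [Finset.prod_comm]
  rw [← Finset.prod_mul_distrib]
  refine Finset.prod_congr rfl fun i _ => ?_
  rw [← Finset.prod_mul_distrib]
  refine Finset.prod_congr rfl fun j _ => ?_
  split_ifs with h
  · have hp : 0 < y i - y j := sub_pos.2 (hy.2 i j h)
    rw [abs_of_pos hp, pw, if_pos hp, two_mul, Complex.cpow_add _ _ (by exact_mod_cast hp.ne')]
  · simp

lemma integrand_eq {d : ℕ} {c : (Fin n → ℤ) →₀ ℂ} (hd : ∀ k ∈ c.support, ∀ i, -(d : ℤ) ≤ k i)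
    (α β γ : ℂ) {y : Fin n → ℝ} (hy : y ∈ orderedSimplex n) :
    selbergIntegrand n (laurentEval c) α β γ y = evy y (qq d c) * W (α - d, β, γ) y := by
  unfold selbergIntegrand W
  rw [qq_ev hd (S_sub hy), vand γ hy]
  have : ∏ i, ((y i : ℂ) ^ α * (((1 - y i : ℝ)) : ℂ) ^ β) =
      (∏ i, (y i : ℂ) ^ d) * ∏ i, (pw (α - d) (y i) * pw β (1 - y i)) := by
    rw [← Finset.prod_mul_distrib]
    refine Finset.prod_congr rfl fun i _ => ?_
    rw [← mul_assoc, pw_sub_nat α d (hy.1 i).1]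
    congr 1
    rw [pw, if_pos (by linarith [(hy.1 i).2])]
  rw [this]
  ring

lemma II_S {d : ℕ} {c : (Fin n → ℤ) →₀ ℂ} (hd : ∀ k ∈ c.support, ∀ i, -(d : ℤ) ≤ k i)
    (hsym : ∀ (σ : Equiv.Perm (Fin n)) (y : Fin n → ℝ), laurentEval c (y ∘ σ) = laurentEval c y)
    {α β γ : ℂ} (ha : (d : ℝ) - 1 < α.re) (hb : -1 < β.re) (hc : 0 < γ.re) :
    II (qq d c) (α - d, β, γ) = (n.factorial : ℂ) * selbergS n (laurentEval c) α β γ := by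
  have hp : ((α - d, β, γ) : P3) ∈ Hs (-1) (-1) 0 := ⟨by simp; linarith, hb, hc⟩
  unfold II selbergS
  rw [fold (fun y => evy y (qq d c) * W (α - d, β, γ) y) (W_int _ hp)
    (fun y hy => by rw [W_off _ hy, mul_zero])]
  · congr 1
    exact setIntegral_congr_fun S_meas fun y hy => (integrand_eq hd α β γ hy).symm
  · intro σ y
    simp only [W_perm]
    by_cases hy : y ∘ σ ∈ U n
    · rw [qq_ev hd hy, qq_ev hd (U_perm σ hy), hsym]
      congr 2
      exact Equiv.prod_comp σ (fun i => (y i : ℂ) ^ d)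
    · rw [← W_perm _ σ y, W_off _ hy, mul_zero, mul_zero]

lemma final (d : ℕ) (c : (Fin n → ℤ) →₀ ℂ) (hd : ∀ k ∈ c.support, ∀ i, -(d : ℤ) ≤ k i)
    (hsym : ∀ (σ : Equiv.Perm (Fin n)) (y : Fin n → ℝ), laurentEval c (y ∘ σ) = laurentEval c y) :
    ∃ F : ℂ × ℂ × ℂ → ℂ, AnalyticOnNhd ℂ F (setAhat n)ᶜ ∧
        ∀ p : ℂ × ℂ × ℂ, p ∉ setAhat n →
          (d : ℝ) - 1 < p.1.re → -1 < p.2.1.re → 0 < p.2.2.re →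
          F p = selbergS n (laurentEval c) p.1 p.2.1 p.2.2 := by
  obtain ⟨F, hF, hFe⟩ := continuation (n := n) good (qq d c)
  have hsh : ∀ p : P3, p ∈ (setAhat n)ᶜ → ((p.1 - d, p.2.1, p.2.2) : P3) ∈ (setAhat n)ᶜ := by
    intro p hp
    have h := Om_shift p (-(d : ℤ)) 0 0 hp
    convert h using 1
    ext <;> simp [sub_eq_add_neg]
  refine ⟨fun p => (n.factorial : ℂ)⁻¹ * F (p.1 - d, p.2.1, p.2.2), fun p hp => ?_, fun p hp h1 h2 h3 => ?_⟩
  · have g1 : AnalyticAt ℂ (fun p : P3 => ((p.1 - d, p.2.1, p.2.2) : P3)) p := by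
      have k2 : AnalyticAt ℂ (fun p : P3 => p.2) p := analyticAt_snd
      have k21 : AnalyticAt ℂ (fun p : P3 => p.2.1) p := analyticAt_fst.comp k2
      have k22 : AnalyticAt ℂ (fun p : P3 => p.2.2) p := analyticAt_snd.comp k2
      exact (analyticAt_fst.sub analyticAt_const).prod (k21.prod k22)
    exact analyticAt_const.mul (AnalyticAt.comp (f := fun p : P3 => ((p.1 - d, p.2.1, p.2.2) : P3))
      (hF _ (hsh p hp)) g1)
  · have hm : ((p.1 - d, p.2.1, p.2.2) : P3) ∈ (setAhat n)ᶜ ∩ Hs (-1) (-1) 0 :=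
      ⟨hsh p hp, by simp; linarith, h2, h3⟩
    have hne : (n.factorial : ℂ) ≠ 0 := by exact_mod_cast n.factorial_ne_zero
    simp only
    rw [hFe _ hm, II_S hd hsym h1 h2 h3, inv_mul_cancel_left₀ hne]

end SelE
/-- Sussman's theorem: for a *symmetric* Laurent polynomial `f`, the Selberg integral
`S_n[f]` admits a unique analytic continuation to `ℂ³ ∖ Â_n`. -/
theorem selberg_unique_analytic_continuation_Ahat (n d : ℕ) (hn : 1 ≤ n)
    (c : (Fin n → ℤ) →₀ ℂ) (hd : ∀ k ∈ c.support, ∀ i, -(d : ℤ) ≤ k i)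
    (hsym : ∀ (σ : Equiv.Perm (Fin n)) (y : Fin n → ℝ),
      laurentEval c (y ∘ σ) = laurentEval c y) :
    ∃ F : ℂ × ℂ × ℂ → ℂ,
      (AnalyticOnNhd ℂ F (setAhat n)ᶜ ∧
        ∀ p : ℂ × ℂ × ℂ, p ∉ setAhat n →
          (d : ℝ) - 1 < p.1.re → -1 < p.2.1.re → 0 < p.2.2.re →
          F p = selbergS n (laurentEval c) p.1 p.2.1 p.2.2) ∧
      ∀ G : ℂ × ℂ × ℂ → ℂ,
        (AnalyticOnNhd ℂ G (setAhat n)ᶜ ∧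
          ∀ p : ℂ × ℂ × ℂ, p ∉ setAhat n →
            (d : ℝ) - 1 < p.1.re → -1 < p.2.1.re → 0 < p.2.2.re →
            G p = selbergS n (laurentEval c) p.1 p.2.1 p.2.2) →
        Set.EqOn G F (setAhat n)ᶜ := by
  obtain ⟨F, hF, hFe⟩ := SelE.final d c hd hsym
  refine ⟨F, ⟨hF, hFe⟩, ?_⟩
  rintro G ⟨hG, hGe⟩ p hp
  have h := SelE.uniq n (p.1.re - 1) (p.2.1.re - 1) (p.2.2.re - 1) (d : ℝ) G F
    (fun q hq => hG q hq.1) (fun q hq => hF q hq.1) ?_ p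
    ⟨hp, by linarith, by linarith, by linarith⟩
  · exact h
  · rintro q ⟨hq, h1, h2, h3⟩
    have hd0 : (0 : ℝ) ≤ d := Nat.cast_nonneg d
    rw [hGe q hq (by linarith) (by linarith) (by linarith),
      hFe q hq (by linarith) (by linarith) (by linarith)]

end
end

section
/- Let α, β ∈ ℂ with Re α > −1, Re β > −1, α ∉ ℤ and β ∉ ℤ, and let r ∈ ℝ with 0 < r < 1/2. Define J(r) = ∫_r^{1−r} u^α (1−u)^β du (real positive bases), I₀(r) = ∫_0^1 exp(α(log r + 2πi t)) · (1 − r e^{2πi t})^β · 2πi r e^{2πi t} dt, and I₁(r) = −∫_0^1 (1 − r e^{2πi t})^α · exp(β(log r + 2πi t)) · 2πi r e^{2πi t} dt, where (1 − r e^{2πi t})^w denotes the principal power (the base has positive real part since r < 1/2). Then J(r) − (1 − e^{2πiα})^{−1} · I₀(r) + (1 − e^{2πiβ})^{−1} · I₁(r) = Γ(α+1)Γ(β+1)/Γ(α+β+2); in particular the left-hand side does not depend on r. -/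
open Complex intervalIntegral

noncomputable section

lemma rbi_ccpow {X : Type*} [TopologicalSpace X] {f : X → ℂ} {x : X} {c : ℂ}
    (h : f x ∈ slitPlane) (hf : ContinuousAt f x) : ContinuousAt (fun y => f y ^ c) x :=
  hf.cpow continuousAt_const h

lemma rbi_slit {z : ℂ} (hz : ‖z‖ < 1) {s : ℝ} (h0 : 0 ≤ s) (h1 : s ≤ 1) :
    1 - (s : ℂ) * z ∈ slitPlane := by
  left
  have h2 : ((s : ℂ) * z).re ≤ ‖(s : ℂ) * z‖ := Complex.re_le_norm _
  have h3 : ‖(s : ℂ) * z‖ ≤ ‖z‖ := by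
    rw [norm_mul, Complex.norm_real, Real.norm_of_nonneg h0]
    exact mul_le_of_le_one_left (norm_nonneg _) h1
  rw [sub_re, one_re]; linarith

lemma rbi_cont (c : ℂ) {z : ℂ} (hz : ‖z‖ < 1) :
    ContinuousOn (fun s : ℝ => (1 - (s : ℂ) * z) ^ c) (Set.uIcc 0 1) := by
  intro s hs
  rw [Set.uIcc_of_le zero_le_one] at hs
  apply ContinuousAt.continuousWithinAt
  apply rbi_ccpow
  · exact rbi_slit hz hs.1 hs.2
  · fun_prop

lemma rbi_int (a c : ℂ) (ha : -1 < a.re) {z : ℂ} (hz : ‖z‖ < 1) :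
    IntervalIntegrable (fun s : ℝ => (s : ℂ) ^ a * (1 - (s : ℂ) * z) ^ c)
      MeasureTheory.volume 0 1 :=
  (intervalIntegrable_cpow' ha).mul_continuousOn (rbi_cont c hz)

lemma rbi_int' (a b : ℂ) (ha : -1 < a.re) {z : ℂ} (hz : ‖z‖ < 1) :
    IntervalIntegrable
      (fun s : ℝ => (s : ℂ) ^ a * (b * (1 - (s : ℂ) * z) ^ (b - 1) * (-(s : ℂ))))
      MeasureTheory.volume 0 1 := by
  apply (intervalIntegrable_cpow' ha).mul_continuousOn
  exact (continuousOn_const.mul (rbi_cont (b - 1) hz)).mul (by fun_prop)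

lemma rbi_deriv (a b : ℂ) (ha : -1 < a.re) {z : ℂ} (hz : ‖z‖ < 1) :
    HasDerivAt (fun z : ℂ => ∫ s in (0 : ℝ)..1, (s : ℂ) ^ a * (1 - (s : ℂ) * z) ^ b)
      (∫ s in (0 : ℝ)..1, (s : ℂ) ^ a * (b * (1 - (s : ℂ) * z) ^ (b - 1) * (-(s : ℂ)))) z := by
  obtain ⟨R, hzR, hR⟩ := exists_between hz
  obtain ⟨C, hC⟩ : ∃ C, ∀ w ∈ Metric.closedBall (0 : ℂ) R, ‖b * (1 - w) ^ (b - 1)‖ ≤ C := by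
    apply (isCompact_closedBall (0 : ℂ) R).exists_bound_of_continuousOn
    intro w hw
    rw [mem_closedBall_zero_iff] at hw
    apply ContinuousAt.continuousWithinAt
    apply continuousAt_const.mul
    apply rbi_ccpow
    · have := rbi_slit (lt_of_le_of_lt hw hR) zero_le_one le_rfl
      simpa using this
    · fun_prop
  have hnorm : ∀ x ∈ Metric.ball (0 : ℂ) R, ‖x‖ < 1 := fun x hx =>
    lt_trans (mem_ball_zero_iff.1 hx) hR
  have hnhds : Metric.ball (0 : ℂ) R ∈ nhds z :=
    Metric.isOpen_ball.mem_nhds (mem_ball_zero_iff.2 hzR)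
  refine (intervalIntegral.hasDerivAt_integral_of_dominated_loc_of_deriv_le
    (F := fun (z : ℂ) (s : ℝ) => (s : ℂ) ^ a * (1 - (s : ℂ) * z) ^ b)
    (F' := fun (z : ℂ) (s : ℝ) => (s : ℂ) ^ a * (b * (1 - (s : ℂ) * z) ^ (b - 1) * (-(s : ℂ))))
    (bound := fun s : ℝ => ‖(s : ℂ) ^ a‖ * C) hnhds ?_ (rbi_int a b ha hz)
    ?_ ?_ ?_ ?_).2
  · filter_upwards [hnhds] with x hx
    rw [Set.uIoc_of_le zero_le_one]
    exact (rbi_int a b ha (hnorm x hx)).aestronglyMeasurable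
  · rw [Set.uIoc_of_le zero_le_one]
    exact (rbi_int' a b ha hz).aestronglyMeasurable
  · refine Filter.Eventually.of_forall fun s hs x hx => ?_
    rw [Set.uIoc_of_le zero_le_one] at hs
    rw [norm_mul]
    apply mul_le_mul_of_nonneg_left _ (norm_nonneg _)
    have hs' : ‖-(s : ℂ)‖ ≤ 1 := by
      rw [norm_neg, Complex.norm_real, Real.norm_of_nonneg hs.1.le]; exact hs.2
    have hw : (s : ℂ) * x ∈ Metric.closedBall (0 : ℂ) R := by
      rw [mem_closedBall_zero_iff, norm_mul]
      rw [norm_neg] at hs'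
      exact le_trans (mul_le_of_le_one_left (norm_nonneg _) hs') (mem_ball_zero_iff.1 hx).le
    rw [norm_mul]
    exact le_trans (mul_le_of_le_one_right (norm_nonneg _) hs') (hC _ hw)
  · exact (intervalIntegrable_cpow' ha).norm.mul_const C
  · refine Filter.Eventually.of_forall fun s hs x hx => ?_
    rw [Set.uIoc_of_le zero_le_one] at hs
    apply HasDerivAt.const_mul
    apply HasDerivAt.cpow_const
    · simpa using ((hasDerivAt_id x).const_mul (s : ℂ)).const_sub 1
    · exact rbi_slit (hnorm x hx) hs.1.le hs.2

lemma rbi_parts (a b : ℂ) (ha : -1 < a.re) {z : ℂ} (hz : ‖z‖ < 1) :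
    (a + 1) * (∫ s in (0 : ℝ)..1, (s : ℂ) ^ a * (1 - (s : ℂ) * z) ^ b) +
      z * (∫ s in (0 : ℝ)..1, (s : ℂ) ^ a * (b * (1 - (s : ℂ) * z) ^ (b - 1) * (-(s : ℂ))))
      = (1 - z) ^ b := by
  have ha1 : 0 < (a + 1).re := by rw [add_re, one_re]; linarith
  have ha0 : a + 1 ≠ 0 := by intro h; rw [h] at ha1; simp at ha1
  rw [← intervalIntegral.integral_const_mul, ← intervalIntegral.integral_const_mul,
    ← intervalIntegral.integral_add ((rbi_int a b ha hz).const_mul _)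
      ((rbi_int' a b ha hz).const_mul _)]
  rw [intervalIntegral.integral_eq_sub_of_hasDerivAt_of_le
    (f := fun s : ℝ => (s : ℂ) ^ (a + 1) * (1 - (s : ℂ) * z) ^ b) zero_le_one]
  · simp [ha0]
  · have := rbi_cont b hz
    rw [Set.uIcc_of_le zero_le_one] at this
    exact (continuous_ofReal_cpow_const ha1).continuousOn.mul this
  · intro s hs
    have hs0 : (s : ℂ) ≠ 0 := by exact_mod_cast hs.1.ne'
    have h1 := hasDerivAt_ofReal_cpow_const hs.1.ne' ha0
    have h2 : HasDerivAt (fun s : ℝ => (1 - (s : ℂ) * z) ^ b)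
        (b * (1 - (s : ℂ) * z) ^ (b - 1) * (-z)) s := by
      have h3 : HasDerivAt (fun w : ℂ => (1 - w * z) ^ b)
          (b * (1 - (s : ℂ) * z) ^ (b - 1) * (-z)) (s : ℂ) := by
        apply HasDerivAt.cpow_const
        · simpa using ((hasDerivAt_id (s : ℂ)).mul_const z).const_sub 1
        · exact rbi_slit hz hs.1.le hs.2.le
      exact h3.comp_ofReal
    refine (h1.mul h2).congr_deriv ?_
    rw [cpow_add _ _ hs0, cpow_one, add_sub_cancel_right]
    ring
  · exact ((rbi_int a b ha hz).const_mul _).add ((rbi_int' a b ha hz).const_mul _)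

lemma rbi_circle (a b : ℂ) (ha : -1 < a.re) {r : ℝ} (hr0 : 0 < r) (hr : r < 1) :
    (∫ t in (0 : ℝ)..1,
          Complex.exp (a * ((Real.log r : ℂ) + 2 * (Real.pi : ℂ) * I * (t : ℂ))) *
            ((1 : ℂ) - (r : ℂ) * Complex.exp (2 * (Real.pi : ℂ) * I * (t : ℂ))) ^ b *
            (2 * (Real.pi : ℂ) * I * (r : ℂ) *
              Complex.exp (2 * (Real.pi : ℂ) * I * (t : ℂ)))) =
    (Complex.exp (2 * (Real.pi : ℂ) * I * a) - 1) *
      ∫ u in (0 : ℝ)..r, (u : ℂ) ^ a * (1 - (u : ℂ)) ^ b := by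
  have hrc : (r : ℂ) ≠ 0 := by exact_mod_cast hr0.ne'
  have hexr : cexp (Real.log r : ℂ) = r := by
    rw [← Complex.ofReal_exp, Real.exp_log hr0]
  set g : ℂ → ℂ := fun z => ∫ s in (0 : ℝ)..1, (s : ℂ) ^ a * (1 - (s : ℂ) * z) ^ b with hg
  have hn : ∀ t : ℝ, ‖(r : ℂ) * cexp (2 * (Real.pi : ℂ) * I * (t : ℂ))‖ < 1 := by
    intro t
    have : (2 * (Real.pi : ℂ) * I * (t : ℂ)) = ((2 * Real.pi * t : ℝ) : ℂ) * I := by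
      push_cast; ring
    rw [this, norm_mul, Complex.norm_exp_ofReal_mul_I, Complex.norm_real,
      Real.norm_of_nonneg hr0.le, mul_one]
    exact hr
  have hscale : (∫ u in (0 : ℝ)..r, (u : ℂ) ^ a * (1 - (u : ℂ)) ^ b) =
      cexp ((a + 1) * (Real.log r : ℂ)) * g r := by
    have h := intervalIntegral.smul_integral_comp_mul_left (a := 0) (b := 1)
      (fun u : ℝ => (u : ℂ) ^ a * (1 - (u : ℂ)) ^ b) r
    rw [mul_zero, mul_one] at h
    rw [← h, add_mul, one_mul, Complex.exp_add, hexr, hg]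
    have hra : cexp (a * (Real.log r : ℂ)) = (r : ℂ) ^ a := by
      rw [cpow_def_of_ne_zero hrc, Complex.ofReal_log hr0.le, mul_comm]
    rw [hra, real_smul, mul_comm ((r : ℂ) ^ a), mul_assoc,
      ← intervalIntegral.integral_const_mul ((r : ℂ) ^ a)]
    congr 1
    apply intervalIntegral.integral_congr
    intro s hs
    rw [Set.uIcc_of_le zero_le_one] at hs
    simp only
    rw [ofReal_mul, mul_cpow_ofReal_nonneg hr0.le hs.1, mul_comm (r : ℂ) (s : ℂ)]
    ring
  rw [intervalIntegral.integral_eq_sub_of_hasDerivAt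
    (f := fun t : ℝ => cexp ((a + 1) * ((Real.log r : ℂ) + 2 * (Real.pi : ℂ) * I * (t : ℂ))) *
      g ((r : ℂ) * cexp (2 * (Real.pi : ℂ) * I * (t : ℂ))))]
  · rw [hscale]
    simp only [ofReal_one, ofReal_zero, mul_one, mul_zero, add_zero, Complex.exp_zero,
      Complex.exp_two_pi_mul_I]
    have : (a + 1) * ((Real.log r : ℂ) + 2 * (Real.pi : ℂ) * I) =
      (a + 1) * (Real.log r : ℂ) + 2 * (Real.pi : ℂ) * I * a + 2 * (Real.pi : ℂ) * I := by ring
    rw [this, Complex.exp_add, Complex.exp_add, Complex.exp_two_pi_mul_I]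
    ring
  · intro t _
    have hd := rbi_deriv a b ha (hn t)
    have hp := rbi_parts a b ha (hn t)
    have h0 : HasDerivAt (fun w : ℂ => 2 * (Real.pi : ℂ) * I * w) (2 * (Real.pi : ℂ) * I) (t : ℂ) := by
      simpa using (hasDerivAt_id (t : ℂ)).const_mul (2 * (Real.pi : ℂ) * I)
    have h1 := (h0.cexp.const_mul (r : ℂ))
    have h2 := ((h0.const_add (Real.log r : ℂ)).const_mul (a + 1)).cexp
    have h3 := (h2.mul (hd.comp (t : ℂ) h1)).comp_ofReal
    refine h3.congr_deriv ?_
    simp only [Function.comp]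
    rw [← hp]
    have : (a + 1) * ((Real.log r : ℂ) + 2 * (Real.pi : ℂ) * I * (t : ℂ)) =
      a * ((Real.log r : ℂ) + 2 * (Real.pi : ℂ) * I * (t : ℂ)) + ((Real.log r : ℂ) + 2 * (Real.pi : ℂ) * I * (t : ℂ)) := by ring
    rw [this, Complex.exp_add, Complex.exp_add (Real.log r : ℂ), hexr]
    ring
  · apply Continuous.intervalIntegrable
    apply Continuous.mul
    · apply Continuous.mul
      · fun_prop
      · rw [continuous_iff_continuousAt]
        intro t
        apply rbi_ccpow
        · have := rbi_slit (hn t) zero_le_one le_rfl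
          simpa using this
        · fun_prop
    · fun_prop

lemma rbi_ne (a : ℂ) (h : ∀ m : ℤ, a ≠ (m : ℂ)) :
    (1 - Complex.exp (2 * (Real.pi : ℂ) * I * a)) ≠ 0 := by
  intro h0
  obtain ⟨n, hn⟩ := Complex.exp_eq_one_iff.1 (sub_eq_zero.1 h0).symm
  apply h n
  rw [mul_comm] at hn
  exact mul_right_cancel₀ Complex.two_pi_I_ne_zero hn

/-- The regularized Euler beta integral: for non-integral `α, β` with `Re α, Re β > −1`
and `0 < r < 1/2`, the combination of the segment integral `J(r)` and the two circle
integrals `I₀(r)`, `I₁(r)` along circles of radius `r` around `0` and `1` equals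
`Γ(α+1)Γ(β+1)/Γ(α+β+2)`; in particular it is independent of `r`. -/
theorem regularized_beta_integral (α β : ℂ) (hα : -1 < α.re) (hβ : -1 < β.re)
    (hαZ : ∀ m : ℤ, α ≠ (m : ℂ)) (hβZ : ∀ m : ℤ, β ≠ (m : ℂ))
    (r : ℝ) (hr0 : 0 < r) (hr : r < 1 / 2) :
    (∫ u in r..(1 - r), (u : ℂ) ^ α * (((1 - u : ℝ)) : ℂ) ^ β) -
      (1 - Complex.exp (2 * (Real.pi : ℂ) * I * α))⁻¹ *
        (∫ t in (0 : ℝ)..1,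
          Complex.exp (α * ((Real.log r : ℂ) + 2 * (Real.pi : ℂ) * I * (t : ℂ))) *
            ((1 : ℂ) - (r : ℂ) * Complex.exp (2 * (Real.pi : ℂ) * I * (t : ℂ))) ^ β *
            (2 * (Real.pi : ℂ) * I * (r : ℂ) *
              Complex.exp (2 * (Real.pi : ℂ) * I * (t : ℂ)))) +
      (1 - Complex.exp (2 * (Real.pi : ℂ) * I * β))⁻¹ *
        (-(∫ t in (0 : ℝ)..1,
          ((1 : ℂ) - (r : ℂ) * Complex.exp (2 * (Real.pi : ℂ) * I * (t : ℂ))) ^ α *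
            Complex.exp (β * ((Real.log r : ℂ) + 2 * (Real.pi : ℂ) * I * (t : ℂ))) *
            (2 * (Real.pi : ℂ) * I * (r : ℂ) *
              Complex.exp (2 * (Real.pi : ℂ) * I * (t : ℂ))))) =
      Complex.Gamma (α + 1) * Complex.Gamma (β + 1) / Complex.Gamma (α + β + 2) := by
  set f : ℝ → ℂ := fun u => (u : ℂ) ^ α * (1 - (u : ℂ)) ^ β with hf
  have hB : (∫ u in (0 : ℝ)..1, f u) =
      Complex.Gamma (α + 1) * Complex.Gamma (β + 1) / Complex.Gamma (α + β + 2) := by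
    have h1 : 0 < (α + 1).re := by rw [add_re, one_re]; linarith
    have h2 : 0 < (β + 1).re := by rw [add_re, one_re]; linarith
    have h := Complex.Gamma_mul_Gamma_eq_betaIntegral h1 h2
    have h3 : (α + 1) + (β + 1) = α + β + 2 := by ring
    rw [h3] at h
    have h4 : Complex.Gamma (α + β + 2) ≠ 0 := by
      apply Complex.Gamma_ne_zero_of_re_pos
      rw [← h3, add_re]; linarith
    rw [h, mul_div_cancel_left₀ _ h4, Complex.betaIntegral]
    simp only [add_sub_cancel_right, hf]
  have hI : IntervalIntegrable f MeasureTheory.volume 0 1 := by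
    have := Complex.betaIntegral_convergent (u := α + 1) (v := β + 1)
      (by rw [add_re, one_re]; linarith) (by rw [add_re, one_re]; linarith)
    simpa only [add_sub_cancel_right] using this
  have hsub : ∀ x y : ℝ, 0 ≤ x → x ≤ y → y ≤ 1 →
      IntervalIntegrable f MeasureTheory.volume x y := by
    intro x y hx hxy hy
    apply hI.mono_set
    rw [Set.uIcc_of_le hxy, Set.uIcc_of_le zero_le_one]
    exact Set.Icc_subset_Icc hx hy
  have hsplit : (∫ u in (0 : ℝ)..1, f u) = (∫ u in (0 : ℝ)..r, f u) +
      (∫ u in r..(1 - r), f u) + ∫ u in (1 - r)..1, f u := by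
    rw [intervalIntegral.integral_add_adjacent_intervals
        (hsub 0 r le_rfl hr0.le (by linarith)) (hsub r (1 - r) hr0.le (by linarith) (by linarith)),
      intervalIntegral.integral_add_adjacent_intervals
        (hsub 0 (1 - r) le_rfl (by linarith) (by linarith))
        (hsub (1 - r) 1 (by linarith) (by linarith) le_rfl)]
  have hK1 : (∫ u in (0 : ℝ)..r, (u : ℂ) ^ β * (1 - (u : ℂ)) ^ α) = ∫ u in (1 - r)..1, f u := by
    have := intervalIntegral.integral_comp_sub_left (a := 0) (b := r) f 1
    rw [sub_zero] at this
    rw [← this]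
    congr 1
    ext u
    simp only [hf]
    push_cast
    rw [sub_sub_cancel, mul_comm]
  have hJ : (∫ u in r..(1 - r), (u : ℂ) ^ α * (((1 - u : ℝ)) : ℂ) ^ β) =
      ∫ u in r..(1 - r), f u := by
    simp only [hf]; push_cast; rfl
  have e0 := rbi_circle α β hα hr0 (by linarith : r < 1)
  have e1 := rbi_circle β α hβ hr0 (by linarith : r < 1)
  rw [hK1] at e1
  have e1' : (∫ t in (0 : ℝ)..1,
          ((1 : ℂ) - (r : ℂ) * Complex.exp (2 * (Real.pi : ℂ) * I * (t : ℂ))) ^ α *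
            Complex.exp (β * ((Real.log r : ℂ) + 2 * (Real.pi : ℂ) * I * (t : ℂ))) *
            (2 * (Real.pi : ℂ) * I * (r : ℂ) *
              Complex.exp (2 * (Real.pi : ℂ) * I * (t : ℂ)))) =
      (Complex.exp (2 * (Real.pi : ℂ) * I * β) - 1) * ∫ u in (1 - r)..1, f u := by
    rw [← e1]
    congr 1
    ext t
    ring
  have n0 := rbi_ne α hαZ
  have n1 := rbi_ne β hβZ
  rw [hJ, e0, e1', ← hB, hsplit]
  have key : ∀ A B : ℂ, 1 - A ≠ 0 → (1 - A)⁻¹ * ((A - 1) * B) = -B := by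
    intro A B hA
    rw [show (A - 1) * B = (1 - A) * (-B) by ring, inv_mul_cancel_left₀ hA]
  rw [mul_neg, key _ _ n0, key _ _ n1]
  ring

end
end

section
/- Let p₊, p₋ be coprime integers with 3 ≤ p₊ < p₋, let r be an integer with 2 ≤ r ≤ p₊ − 1, set α₊ = √(2p₋/p₊), and for ε ∈ ℂ set u(ε) = (α₊+ε)²/2, so that u(0) = p₋/p₊. Let f be a symmetric Laurent polynomial in r−1 variables and let F_{r−1}[f] be the unique analytic continuation of S_{r−1}[f] to ℂ³∖Â_{r−1}. Then there exists an open neighborhood U of 0 in ℂ such that for every ε ∈ U the triple ((1−r)·u(ε), 2u(ε), u(ε)) does not lie in Â_{r−1}, and the function ε ↦ F_{r−1}[f]((1−r)·u(ε), 2u(ε), u(ε)) is analytic on U. -/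
open MeasureTheory Complex

noncomputable section

/-- The ε-deformed parameter `u(ε) = (α₊+ε)²/2` with `α₊ = √(2p₋/p₊)`. -/
def udef (pPlus pMinus : ℕ) (ε : ℂ) : ℂ :=
  (((Real.sqrt (2 * (pMinus : ℝ) / (pPlus : ℝ))) : ℂ) + ε) ^ 2 / 2

/-- The values of `u` avoiding all resonances `k u ∈ ℤ`, `1 ≤ k < p`. -/
def goodU (p : ℕ) : Set ℂ :=
  ⋂ k ∈ Finset.Ico 1 p, (fun z : ℂ => (k : ℂ) * z) ⁻¹' (Set.range (fun m : ℤ => (m : ℂ)))ᶜ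

lemma isOpen_goodU (p : ℕ) : IsOpen (goodU p) := by
  unfold goodU
  refine isOpen_biInter_finset fun k _ => ?_
  exact (Complex.isClosed_range_intCast.isOpen_compl).preimage (by fun_prop)

lemma mem_goodU {p : ℕ} {z : ℂ} :
    z ∈ goodU p ↔ ∀ k : ℕ, 1 ≤ k → k < p → ∀ m : ℤ, (k : ℂ) * z ≠ m := by
  simp only [goodU, Set.mem_iInter, Finset.mem_Ico, Set.mem_preimage, Set.mem_compl_iff,
    Set.mem_range, not_exists]
  constructor
  · intro h k h1 h2 m e
    exact h k ⟨h1, h2⟩ m e.symm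
  · intro h k hk m e
    exact h k hk.1 hk.2 m e.symm

lemma udef_zero (p q : ℕ) : udef p q 0 = (q : ℂ) / p := by
  have h : (0 : ℝ) ≤ 2 * (q : ℝ) / p := by positivity
  unfold udef
  rw [add_zero, ← Complex.ofReal_pow, Real.sq_sqrt h]
  push_cast
  ring

lemma udef_zero_mem (p q : ℕ) (hp : 0 < p) (hc : Nat.Coprime p q) :
    udef p q 0 ∈ goodU p := by
  rw [udef_zero, mem_goodU]
  intro k h1 h2 m e
  have hp0 : (p : ℂ) ≠ 0 := by exact_mod_cast hp.ne'
  have e2 : (k : ℂ) * q = m * p := by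
    field_simp at e
    linear_combination e
  have e3 : (k : ℤ) * q = m * p := by exact_mod_cast e2
  have d1 : (p : ℤ) ∣ ((k * q : ℕ) : ℤ) := ⟨m, by push_cast; linarith⟩
  have d2 : p ∣ k := hc.dvd_of_dvd_mul_right (Int.natCast_dvd_natCast.mp d1)
  exact absurd (Nat.le_of_dvd h1 d2) (by omega)

lemma goodU_notMem (p r : ℕ) (hr2 : 2 ≤ r) (hr : r ≤ p - 1) {z : ℂ} (hz : z ∈ goodU p) :
    ((1 - (r : ℂ)) * z, 2 * z, z) ∉ setAhat (r - 1) := by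
  rw [mem_goodU] at hz
  rintro (⟨j, h1, h2, ⟨m, e⟩ | ⟨m, e⟩⟩ | ⟨j, h1, h2, m, e⟩)
  · refine hz (r - j) (by omega) (by omega) (-m) ?_
    rw [Nat.cast_sub (by omega)]
    push_cast
    simp only at e
    linear_combination -e
  · refine hz (j + 1) (by omega) (by omega) m ?_
    push_cast
    simp only at e
    linear_combination e
  · refine hz (j + 1) (by omega) (by omega) m ?_
    push_cast
    exact e

/-- Analyticity in ε of the continued Selberg integral along the deformed parameters of
the screening operator `Q̃₊^{[r]}`. -/
theorem deformed_plus_screening_parameters_analytic (pPlus pMinus : ℕ)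
    (hcop : Nat.Coprime pPlus pMinus) (hp : 3 ≤ pPlus) (hlt : pPlus < pMinus)
    (r : ℕ) (hr2 : 2 ≤ r) (hr : r ≤ pPlus - 1)
    (c : (Fin (r - 1) → ℤ) →₀ ℂ) (d : ℕ)
    (hd : ∀ k ∈ c.support, ∀ i, -(d : ℤ) ≤ k i)
    (hsym : ∀ (σ : Equiv.Perm (Fin (r - 1))) (y : Fin (r - 1) → ℝ),
      laurentEval c (y ∘ σ) = laurentEval c y)
    (F : ℂ × ℂ × ℂ → ℂ)
    (hF : AnalyticOnNhd ℂ F (setAhat (r - 1))ᶜ)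
    (hFS : ∀ p : ℂ × ℂ × ℂ, p ∉ setAhat (r - 1) →
      (d : ℝ) - 1 < p.1.re → -1 < p.2.1.re → 0 < p.2.2.re →
      F p = selbergS (r - 1) (laurentEval c) p.1 p.2.1 p.2.2) :
    ∃ U : Set ℂ, IsOpen U ∧ (0 : ℂ) ∈ U ∧
      (∀ ε ∈ U,
        ((1 - (r : ℂ)) * udef pPlus pMinus ε, 2 * udef pPlus pMinus ε,
          udef pPlus pMinus ε) ∉ setAhat (r - 1)) ∧
      AnalyticOnNhd ℂ
        (fun ε : ℂ =>
          F ((1 - (r : ℂ)) * udef pPlus pMinus ε, 2 * udef pPlus pMinus ε,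
            udef pPlus pMinus ε)) U := by
  have hu : Differentiable ℂ (udef pPlus pMinus) := by
    unfold udef
    fun_prop
  refine ⟨udef pPlus pMinus ⁻¹' goodU pPlus, (isOpen_goodU _).preimage hu.continuous,
    udef_zero_mem _ _ (by omega) hcop, fun ε hε => goodU_notMem _ _ hr2 hr hε, ?_⟩
  intro ε hε
  have ha : AnalyticAt ℂ (udef pPlus pMinus) ε := hu.analyticAt ε
  have h3 : AnalyticAt ℂ (fun ε : ℂ => ((1 - (r : ℂ)) * udef pPlus pMinus ε,
      2 * udef pPlus pMinus ε, udef pPlus pMinus ε)) ε :=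
    (analyticAt_const.mul ha).prod ((analyticAt_const.mul ha).prod ha)
  exact AnalyticAt.comp_of_eq (hF _ (goodU_notMem _ _ hr2 hr hε)) h3 rfl

end
end
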